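/- Let $k$ be a field of characteristic zero and let $C$ be a geometrically irreducible quasi-projective curve over $k$, that is, a reduced, geometrically irreducible, quasi-projective $k$-scheme of dimension one. Let $\mathcal L$ be an invertible sheaf on $C$ and let $V\subset H^0(C,\mathcal L)$ be a $k$-linear subspace of finite dimension $v$. For an integer $r\ge 0$ let $K$ be the function field of $C\times_k\cdots\times_k C$ ($r$ factors), put $C_K=C\times_k K$, and let $x_1,\ldots,x_r$ be the generic set of $r$ closed points of $C$: $x_i$ is the $K$-rational point of $C_K$ given by the composite of the generic point $\operatorname{Spec}K\to C\times_k\cdots\times_k C$ with the $i$-th projection to $C$. Let $m_1,\ldots,m_r$ be positive integers and let $D=m_1x_1+\cdots+m_rx_r$ be the divisor on $C_K$, i.e. the closed subscheme of $C_K$ with ideal sheaf $\prod_i \mathcal I_{x_i}^{m_i}$. Then the canonical evaluation map $$V\otimes_k K\longrightarrow H^0(C_K,\mathcal O_D\otimes\mathcal L),$$ the $K$-linear extension of the restriction of sections $V\to H^0(C_K,\mathcal O_D\otimes\mathcal L)$, has maximal rank, i.e. it is injective or surjective. -/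

import Mathlib

open CategoryTheory CategoryTheory.Limits AlgebraicGeometry TopologicalSpace

open scoped TensorProduct

universe u

namespace GenericDivisor

/-! ### Quasi-projective schemes over a field, invertible sheaves -/

section Projective

attribute [local instance] MvPolynomial.gradedAlgebra

/-- Projective space `ℙⁿ` over `k`, as the homogeneous spectrum of `k[X₀, …, Xₙ]`. -/
noncomputable abbrev projSpace (k : Type u) [Field k] (n : ℕ) : Scheme.{u} :=
  Proj (MvPolynomial.homogeneousSubmodule (Fin (n + 1)) k)

/-- The structure morphism `ℙⁿ ⟶ Spec k`. -/
noncomputable def projSpaceStr (k : Type u) [Field k] (n : ℕ) :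
    projSpace k n ⟶ Spec (.of k) :=
  Proj.toSpecZero (MvPolynomial.homogeneousSubmodule (Fin (n + 1)) k) ≫
    Spec.map (CommRingCat.ofHom
      (algebraMap k (MvPolynomial.homogeneousSubmodule (Fin (n + 1)) k 0)))

end Projective

/-- A `k`-scheme is quasi-projective if it is isomorphic over `k` to a locally closed subscheme
of some projective space `ℙⁿ` over `k`. -/
def IsQuasiProjective {k : Type u} [Field k] {C : Scheme.{u}} (f : C ⟶ Spec (.of k)) : Prop :=
  ∃ (n : ℕ) (i : C ⟶ projSpace k n), IsImmersion i ∧ i ≫ projSpaceStr k n = f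

/-- An `𝒪_X`-module is invertible if it is locally isomorphic to `𝒪_X`. -/
def IsInvertibleSheaf {X : Scheme.{u}} (L : X.Modules) : Prop :=
  ∀ x : X, ∃ U : X.Opens, x ∈ U ∧
    Nonempty (L.restrict U.ι ≅ (SheafOfModules.unit U.toScheme.ringCatSheaf : U.toScheme.Modules))

/-! ### Global sections as modules over the base, and their pullback -/

/-- The module `H⁰(X, M)` of global sections of an `𝒪_X`-module `M` on a scheme `p : X ⟶ Spec R`,
as a module over the base ring `R`. -/
def GlobalSections {R : Type u} [CommRing R] {X : Scheme.{u}} (_p : X ⟶ Spec (.of R))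
    (M : X.Modules) : Type u :=
  Γ(M, ⊤)

section GlobalSections

variable {R : Type u} [CommRing R] {X : Scheme.{u}} (p : X ⟶ Spec (.of R)) (M : X.Modules)

/-- The ring homomorphism `R ⟶ Γ(X, 𝒪_X)` of a scheme `p : X ⟶ Spec R`. -/
noncomputable def baseToSections : R →+* Γ(X, ⊤) :=
  ((Scheme.ΓSpecIso (.of R)).inv ≫ p.appTop).hom

noncomputable instance : AddCommGroup (GlobalSections p M) :=
  inferInstanceAs (AddCommGroup Γ(M, ⊤))

noncomputable instance : Module Γ(X, ⊤) (GlobalSections p M) :=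
  inferInstanceAs (Module Γ(X, ⊤) Γ(M, ⊤))

noncomputable instance : Module R (GlobalSections p M) :=
  Module.compHom _ (baseToSections p)

variable {S : Type u} [CommRing S] {Y : Scheme.{u}} (q : Y ⟶ Spec (.of S))

/-- Pullback of sections `H⁰(X, M) → H⁰(Y, g^*M)` along `g : Y ⟶ X`: the component on global
sections of the unit `M ⟶ g_* g^* M`. -/
noncomputable def pullbackSections (g : Y ⟶ X) (φ : R →+* S)
    (h : g ≫ p = q ≫ Spec.map (CommRingCat.ofHom φ)) :
    GlobalSections p M →ₛₗ[φ] GlobalSections q ((Scheme.Modules.pullback g).obj M) where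
  toFun s := (((Scheme.Modules.pullbackPushforwardAdjunction g).unit.app M).app ⊤).hom s
  map_add' s t := map_add _ s t
  map_smul' a s := by
    have key : ((Scheme.ΓSpecIso (.of R)).inv ≫ p.appTop) ≫ g.appTop =
        CommRingCat.ofHom φ ≫ (Scheme.ΓSpecIso (.of S)).inv ≫ q.appTop := by
      rw [Category.assoc, ← Scheme.Hom.comp_appTop, h, Scheme.Hom.comp_appTop,
        Scheme.ΓSpecIso_inv_naturality_assoc]
    have e : g.appTop.hom (baseToSections p a) = baseToSections q (φ a) :=
      congrArg (fun ψ : CommRingCat.of R ⟶ Γ(Y, ⊤) => ψ.hom a) key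
    have h1 := Scheme.Modules.Hom.app_smul
      ((Scheme.Modules.pullbackPushforwardAdjunction g).unit.app M) (baseToSections p a)
      (U := ⊤) s
    let t : GlobalSections q ((Scheme.Modules.pullback g).obj M) :=
      (((Scheme.Modules.pullbackPushforwardAdjunction g).unit.app M).app ⊤).hom s
    exact Eq.trans h1 (congrArg (fun b : Γ(Y, ⊤) => b • t) e)

end GlobalSections

/-! ### The generic set of `r` points of `C` -/

section Generic

variable {k : Type u} [Field k] {C : Scheme.{u}} (f : C ⟶ Spec (.of k))

/-- The `r`-fold product `C × ⋯ × C` over `k`. -/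
noncomputable def power : ℕ → Over (Spec (CommRingCat.of k))
  | 0 => Over.mk (𝟙 _)
  | r + 1 => Over.mk (pullback.fst f (power r).hom ≫ f)

/-- The `r` projections `C × ⋯ × C ⟶ C`. -/
noncomputable def powerProj : (r : ℕ) → Fin r → ((power f r).left ⟶ C)
  | 0 => fun i => i.elim0
  | r + 1 => Fin.cases (pullback.fst f (power f r).hom)
      (fun i => pullback.snd f (power f r).hom ≫ powerProj r i)

theorem powerProj_comp (r : ℕ) (i : Fin r) : powerProj f r i ≫ f = (power f r).hom := by
  induction r with
  | zero => exact i.elim0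
  | succ r ih =>
    refine Fin.cases ?_ (fun i => ?_) i
    · rfl
    · change (pullback.snd f (power f r).hom ≫ powerProj f r i) ≫ f =
        pullback.fst f (power f r).hom ≫ f
      rw [Category.assoc, ih, pullback.condition]

variable [GeometricallyIrreducible f]

instance irreducibleSpace_power (r : ℕ) : IrreducibleSpace (power f r).left := by
  induction r with
  | zero => exact inferInstanceAs (IrreducibleSpace (Spec (CommRingCat.of k)))
  | succ r ih =>
    exact inferInstanceAs (IrreducibleSpace ↥(pullback f (power f r).hom))

/-- The function field `K` of `C × ⋯ × C` (`r` factors). -/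
noncomputable abbrev genericField (r : ℕ) : Type u :=
  (power f r).left.functionField

/-- The generic point of `C × ⋯ × C`, as a morphism `Spec K ⟶ C × ⋯ × C`. -/
noncomputable def genericPt (r : ℕ) : Spec (.of (genericField f r)) ⟶ (power f r).left :=
  (power f r).left.fromSpecStalk (genericPoint (power f r).left)

/-- The inclusion `k → K`. -/
noncomputable def toGenericField (r : ℕ) : k →+* genericField f r :=
  (Spec.preimage (genericPt f r ≫ (power f r).hom)).hom

noncomputable instance (r : ℕ) : Algebra k (genericField f r) :=
  (toGenericField f r).toAlgebra

/-- `C_K = C ×_k K`. -/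
noncomputable abbrev baseChange (r : ℕ) : Scheme.{u} :=
  pullback f (Spec.map (CommRingCat.ofHom (toGenericField f r)))

/-- The generic set of points: `x_i` is the `K`-rational point of `C_K` whose projection to `C`
is the `i`-th projection `C × ⋯ × C ⟶ C` at the generic point of `C × ⋯ × C`. -/
noncomputable def genericX (r : ℕ) (i : Fin r) : Spec (.of (genericField f r)) ⟶ baseChange f r :=
  pullback.lift (genericPt f r ≫ powerProj f r i) (𝟙 _) (by
    rw [Category.assoc, powerProj_comp, Category.id_comp, toGenericField,
      CommRingCat.ofHom_hom, Spec.map_preimage])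

/-- The ideal sheaf `∏ I_{x_i}^{m_i}` of `D = ∑ m_i x_i` on `C_K`. -/
noncomputable def idealD (r : ℕ) (m : Fin r → ℕ) : (baseChange f r).IdealSheafData :=
  ∏ i, (genericX f r i).ker ^ m i

/-- The divisor `D = ∑ m_i x_i`, as a closed subscheme of `C_K`. -/
noncomputable abbrev schemeD (r : ℕ) (m : Fin r → ℕ) : Scheme.{u} :=
  (idealD f r m).subscheme

/-- The morphism `D ⟶ C_K ⟶ C`. -/
noncomputable def toC (r : ℕ) (m : Fin r → ℕ) : schemeD f r m ⟶ C :=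
  (idealD f r m).subschemeι ≫ pullback.fst f (Spec.map (CommRingCat.ofHom (toGenericField f r)))

/-- The structure morphism `D ⟶ C_K ⟶ Spec K`. -/
noncomputable def toSpecK (r : ℕ) (m : Fin r → ℕ) : schemeD f r m ⟶ Spec (.of (genericField f r)) :=
  (idealD f r m).subschemeι ≫ pullback.snd f (Spec.map (CommRingCat.ofHom (toGenericField f r)))

theorem toC_comp (r : ℕ) (m : Fin r → ℕ) :
    toC f r m ≫ f = toSpecK f r m ≫ Spec.map (CommRingCat.ofHom (toGenericField f r)) := by
  simp only [toC, toSpecK, Category.assoc, pullback.condition]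

/-- The `K`-vector space `H⁰(C_K, 𝒪_D ⊗ L) = H⁰(D, L|_D)`, where `L|_D` is the pullback of `L`
along `D ⟶ C_K ⟶ C`. -/
abbrev H0D (L : C.Modules) (r : ℕ) (m : Fin r → ℕ) : Type u :=
  GlobalSections (toSpecK f r m) ((Scheme.Modules.pullback (toC f r m)).obj L)

noncomputable instance (L : C.Modules) (r : ℕ) (m : Fin r → ℕ) : Module k (H0D f L r m) :=
  Module.compHom _ (algebraMap k (genericField f r))

instance (L : C.Modules) (r : ℕ) (m : Fin r → ℕ) :
    IsScalarTower k (genericField f r) (H0D f L r m) :=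
  IsScalarTower.of_algebraMap_smul fun _ _ => rfl

/-- Evaluation of global sections of `L` along `D`: restriction
`H⁰(C, L) → H⁰(C_K, 𝒪_D ⊗ L)`. -/
noncomputable def evalD (L : C.Modules) (r : ℕ) (m : Fin r → ℕ) :
    GlobalSections f L →ₗ[k] H0D f L r m where
  toFun := pullbackSections f L (toSpecK f r m) (toC f r m) (toGenericField f r) (toC_comp f r m)
  map_add' := map_add _
  map_smul' := fun a s => (pullbackSections f L (toSpecK f r m) (toC f r m) (toGenericField f r)
    (toC_comp f r m)).map_smulₛₗ a s

/-- The canonical `K`-linear map `K ⊗_k V → H⁰(C_K, 𝒪_D ⊗ L)` for a subspace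
`V ⊆ H⁰(C, L)`. -/
noncomputable def canonicalMap (L : C.Modules) (V : Submodule k (GlobalSections f L)) (r : ℕ)
    (m : Fin r → ℕ) : genericField f r ⊗[k] V →ₗ[genericField f r] H0D f L r m :=
  LinearMap.liftBaseChange (genericField f r) ((evalD f L r m).comp V.subtype)

end Generic

end GenericDivisor

/-!
The theorem is proved by induction on `∑ mᵢ`, adding one point `x` to `D` at a time. If the map is
injective for `D`, it is injective for `D + x`. Otherwise it is surjective for `D` and some nonzero
element of `V ⊗ K` vanishes on `D`; since the degree goes up by only one, it is enough to find an
element of `V ⊗ K` that vanishes on `D` but not on `D + x`. If there were none, the elements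
vanishing on `D` would be stable under the derivations of `K` that are trivial on a ring of
definition `R` of the points other than `x`: such a derivation lowers the order of vanishing at `x`
by at most one and preserves the conditions at the other points. In characteristic zero a nonzero
subspace stable under these derivations contains a nonzero element with coefficients algebraic
over `R`, and such an element cannot vanish at `x`, which is generic over `R`.
-/

namespace GenericDivisor

/-! ### Derivations in characteristic zero -/

section AlgebraicCoefficients

theorem formallyEtale_of_isAlgebraic (S K : Type*) [CommRing S] [IsDomain S] [Field K] [CharZero K]
    [Algebra S K] [FaithfulSMul S K] [Algebra.IsAlgebraic S K] : Algebra.FormallyEtale S K := by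
  let Q := FractionRing S
  let : Algebra Q K := FractionRing.liftAlgebra S K
  have : IsScalarTower S Q K := FractionRing.isScalarTower_liftAlgebra S K
  have : Algebra.IsAlgebraic Q K :=
    Algebra.IsAlgebraic.extendScalars (R := S) (IsFractionRing.injective S Q)
  have : CharZero Q := ((algebraMap Q K).charZero_iff (algebraMap Q K).injective).2 inferInstance
  have : Algebra.FormallyEtale Q K := Algebra.FormallyEtale.of_isSeparable Q K
  have : Algebra.FormallyEtale S Q :=
    Algebra.FormallyEtale.of_isLocalization (Rₘ := Q) (nonZeroDivisors S)
  exact Algebra.FormallyEtale.comp S Q K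

theorem isAlgebraic_mvPolynomial_of_isTranscendenceBasis {R K ι : Type*} [CommRing R]
    [Nontrivial R] [CommRing K] [Algebra R K] {v : ι → K} (hv : IsTranscendenceBasis R v)
    [Algebra (MvPolynomial ι R) K]
    (halg : algebraMap (MvPolynomial ι R) K = (MvPolynomial.aeval v).toRingHom) :
    Algebra.IsAlgebraic (MvPolynomial ι R) K := by
  have := hv.isAlgebraic
  exact (Algebra.isAlgebraic_ringHom_iff_of_comp_eq hv.1.aevalEquiv (RingEquiv.refl K)
    (by ext <;> simp [halg])).1 this

theorem kaehlerDifferential_D_ne_zero_of_transcendental {R K : Type*} [CommRing R] [IsDomain R]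
    [Field K] [CharZero K] [Algebra R K] {c : K} (hc : Transcendental R c) :
    KaehlerDifferential.D R K c ≠ 0 := by
  obtain ⟨s, hs, hb⟩ := exists_isTranscendenceBasis_superset (R := R) (s := {c})
    ((algebraicIndependent_unique_type_iff (ι := ({c} : Set K)) (x := fun i => (i : K))).2 hc)
  let S := MvPolynomial s R
  let : Algebra S K := (MvPolynomial.aeval Subtype.val).toRingHom.toAlgebra
  have : IsScalarTower R S K := IsScalarTower.of_algebraMap_eq fun r =>
    (MvPolynomial.aeval_C (Subtype.val : s → K) r).symm
  have : FaithfulSMul S K := (faithfulSMul_iff_algebraMap_injective S K).2 hb.1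
  have : Algebra.IsAlgebraic S K := isAlgebraic_mvPolynomial_of_isTranscendenceBasis hb rfl
  have : Algebra.FormallyEtale S K := formallyEtale_of_isAlgebraic S K
  let X : S := MvPolynomial.X ⟨c, hs rfl⟩
  have hX : algebraMap S K X = c := MvPolynomial.aeval_X _ _
  have hbasis : (1 : K) ⊗ₜ[S] KaehlerDifferential.D R S X ≠ 0 := by
    have := ((KaehlerDifferential.mvPolynomialBasis R s).baseChange K).ne_zero ⟨c, hs rfl⟩
    rwa [Module.Basis.baseChange_apply, KaehlerDifferential.mvPolynomialBasis_apply] at this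
  rw [← KaehlerDifferential.tensorKaehlerEquivOfFormallyEtale_symm_D_algebraMap R S K X, hX]
    at hbasis
  exact fun h0 => hbasis (by rw [h0, map_zero])

theorem isAlgebraic_of_forall_derivation_eq_zero {R K : Type*} [CommRing R] [IsDomain R] [Field K]
    [CharZero K] [Algebra R K] {c : K} (h : ∀ D : Derivation R K K, D c = 0) :
    IsAlgebraic R c := by
  by_contra hc
  obtain ⟨l, hl⟩ := Module.Projective.exists_dual_ne_zero K
    (kaehlerDifferential_D_ne_zero_of_transcendental hc)
  exact hl (h (l.compDer (KaehlerDifferential.D R K)))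

section Descent

variable {k K M : Type*} [Field k] [Field K] [Algebra k K] [AddCommGroup M] [Module k M]

theorem repr_baseChange_rTensor {ι : Type*} (b : Module.Basis ι k M) (f : K →ₗ[k] K)
    (x : K ⊗[k] M) (i : ι) :
    (b.baseChange K).repr (f.rTensor M x) i = f ((b.baseChange K).repr x i) := by
  induction x with
  | zero => simp
  | add x y hx hy => simp only [map_add, Finsupp.add_apply, hx, hy]
  | tmul c m => simp

theorem exists_ne_zero_forall_rTensor_eq_zero (𝒟 : Set (Derivation k K K))
    {N : Submodule K (K ⊗[k] M)} (hN : N ≠ ⊥)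
    (hst : ∀ D ∈ 𝒟, ∀ x ∈ N, (D : K →ₗ[k] K).rTensor M x ∈ N) :
    ∃ x ∈ N, x ≠ 0 ∧ ∀ D ∈ 𝒟, (D : K →ₗ[k] K).rTensor M x = 0 := by
  let b := Module.Basis.ofVectorSpace k M
  let e := (b.baseChange K).repr
  obtain ⟨x, ⟨hx, hx0⟩, hmin⟩ :=
    exists_minimalFor_of_wellFoundedLT (fun x => x ∈ N ∧ x ≠ 0) (fun x => (e x).support.card)
      (N.ne_bot_iff.1 hN)
  obtain ⟨j, hj⟩ := Finsupp.ne_iff.1 ((map_ne_zero_iff e e.injective).2 hx0)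
  rw [Finsupp.zero_apply] at hj
  set y := (e x j)⁻¹ • x
  have hyN : y ∈ N := N.smul_mem _ hx
  have hey : e y = (e x j)⁻¹ • e x := map_smul e _ _
  have hyj : e y j = 1 := by rw [hey, Finsupp.smul_apply, smul_eq_mul, inv_mul_cancel₀ hj]
  refine ⟨y, hyN, smul_ne_zero (inv_ne_zero hj) hx0, fun D hD => ?_⟩
  by_contra hne
  -- Applying `D` kills the coordinate `1` of `y` and creates no new nonzero coordinate.
  have hsub : (e ((D : K →ₗ[k] K).rTensor M y)).support ⊂ (e x).support := by
    refine ⟨fun i hi => ?_, fun hsub => ?_⟩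
    · rw [Finsupp.mem_support_iff, repr_baseChange_rTensor] at hi
      rw [Finsupp.mem_support_iff]
      intro h0
      exact hi (by rw [hey, Finsupp.smul_apply, h0, smul_zero, map_zero])
    · refine Finsupp.mem_support_iff.1 (hsub (Finsupp.mem_support_iff.2 hj)) ?_
      rw [repr_baseChange_rTensor, hyj]
      exact D.map_one_eq_zero
  exact (Finset.card_lt_card hsub).not_ge
    (hmin ⟨hst D hD y hyN, hne⟩ (Finset.card_le_card hsub.subset))

theorem mem_span_isAlgebraic_tmul_of_forall_derivation [CharZero K] {R : Type*} [CommRing R]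
    [IsDomain R] [Algebra k R] [Algebra R K] [IsScalarTower k R K] {x : K ⊗[k] M}
    (hx : ∀ D : Derivation R K K, (D.restrictScalars k : K →ₗ[k] K).rTensor M x = 0) :
    x ∈ Submodule.span k (Set.image2 (· ⊗ₜ[k] ·) {c : K | IsAlgebraic R c} (Set.univ : Set M)) := by
  let b := (Module.Basis.ofVectorSpace k M).baseChange K
  rw [← b.linearCombination_repr x, Finsupp.linearCombination_apply]
  refine Submodule.sum_mem _ fun i _ => Submodule.subset_span ?_
  refine ⟨b.repr x i, isAlgebraic_of_forall_derivation_eq_zero fun D => ?_,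
    Module.Basis.ofVectorSpace k M i, trivial, ?_⟩
  · have := repr_baseChange_rTensor (Module.Basis.ofVectorSpace k M) (D.restrictScalars k) x i
    rw [hx D, map_zero] at this
    exact this.symm
  · simp [b, TensorProduct.smul_tmul']

end Descent

end AlgebraicCoefficients

section TensorDerivation

variable {k A K : Type*} [CommRing k] [CommRing A] [Algebra k A] [CommRing K] [Algebra k K]

/-- The `A`-linear derivation `D ⊗ 1` of `K ⊗ A` extending a derivation `D` of `K`. -/
noncomputable def tensorDer (D : Derivation k K K) : Derivation k (K ⊗[k] A) (K ⊗[k] A) :=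
  Derivation.mk' ((D : K →ₗ[k] K).rTensor A) fun x y => by
    induction x with
    | zero => simp
    | add x₁ x₂ h₁ h₂ => simp only [add_mul, map_add, h₁, h₂, add_smul, smul_add]; abel
    | tmul c a =>
      induction y with
      | zero => simp
      | add y₁ y₂ h₁ h₂ => simp only [mul_add, map_add, h₁, h₂, add_smul, smul_add]; abel
      | tmul d b =>
        simp only [Algebra.TensorProduct.tmul_mul_tmul, LinearMap.rTensor_tmul, smul_eq_mul,
          Derivation.coeFn_coe, Derivation.leibniz, TensorProduct.add_tmul, mul_comm b a]

@[simp]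
theorem tensorDer_tmul (D : Derivation k K K) (c : K) (a : A) :
    tensorDer D (c ⊗ₜ[k] a) = D c ⊗ₜ a := rfl

end TensorDerivation

section NilpotentDerivation

variable {k B : Type*} [Field k] [CharZero k] [CommRing B] [Algebra k B] (d : Derivation k B B)

theorem pow_mul_derivation_pow_eq_zero {x : B} {l m : ℕ} (h : x ^ (l + 1) * d x ^ m = 0) :
    x ^ l * d x ^ (m + 2) = 0 := by
  have hd : d (x ^ (l + 1) * d x ^ m) * d x = 0 := by rw [h, map_zero, zero_mul]
  rw [d.leibniz, d.leibniz_pow, d.leibniz_pow] at hd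
  simp only [smul_eq_mul, nsmul_eq_mul, Nat.add_sub_cancel] at hd
  have hmul : ((l + 1 : ℕ) : B) * (x ^ l * d x ^ (m + 2)) = 0 := by
    rcases m with _ | m
    · simp only [pow_zero, Nat.cast_zero, zero_mul, mul_zero] at hd ⊢
      linear_combination hd
    · simp only [Nat.add_sub_cancel] at hd
      linear_combination hd - ((m + 1 : ℕ) : B) * d (d x) * h
  have hunit : IsUnit ((l + 1 : ℕ) : B) := by
    have : IsUnit ((l + 1 : ℕ) : k) := IsUnit.mk0 _ (Nat.cast_ne_zero.2 l.succ_ne_zero)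
    simpa using this.map (algebraMap k B)
  exact hunit.mul_right_eq_zero.1 hmul

theorem isNilpotent_derivation {x : B} (hx : IsNilpotent x) : IsNilpotent (d x) := by
  obtain ⟨n, hn⟩ := hx
  have key : ∀ l m : ℕ, x ^ l * d x ^ m = 0 → IsNilpotent (d x) := by
    intro l
    induction l with
    | zero => exact fun m h => ⟨m, by simpa using h⟩
    | succ l ih => exact fun m h => ih _ (pow_mul_derivation_pow_eq_zero d h)
  exact key n 0 (by simpa using hn)

end NilpotentDerivation

section GeometricallyReduced

variable {k : Type*} [Field k] [CharZero k]

theorem isReduced_tensorProduct_of_isAlgebraic {L F : Type*} [CommRing L] [IsDomain L]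
    [Algebra k L] [Algebra.IsAlgebraic k L] [Field F] [Algebra k F] : IsReduced (F ⊗[k] L) :=
  IsReduced.tensorProduct_of_flat_of_forall_fg fun B hB => by
    have : Algebra.IsAlgebraic k B := .of_injective B.val Subtype.val_injective
    let : Field B := (isField_of_isIntegral_of_isField' (Field.toIsField k)).toField
    have : Algebra.FiniteType k B := B.fg_iff_finiteType.1 hB
    have : Algebra.FormallyUnramified k B := Algebra.FormallyUnramified.of_isSeparable k B
    exact Algebra.FormallyUnramified.isReduced_of_field F (F ⊗[k] B)

variable {K : Type*} [Field K] [Algebra k K]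

theorem eq_zero_of_isNilpotent_of_forall_derivation [CharZero K] {F : Type*} [Field F]
    [Algebra k F] {x : K ⊗[k] F} (hx : IsNilpotent x)
    (hD : ∀ D : Derivation k K K, (D : K →ₗ[k] K).rTensor F x = 0) : x = 0 := by
  let L := Subalgebra.algebraicClosure k K
  let φ : L ⊗[k] F →ₐ[k] K ⊗[k] F := Algebra.TensorProduct.map L.val (AlgHom.id k F)
  have hφ : Function.Injective φ := Module.Flat.rTensor_preserves_injective_linearMap (M := F)
    L.val.toLinearMap Subtype.val_injective
  have hspan : Submodule.span k (Set.image2 (· ⊗ₜ[k] ·) {c : K | IsAlgebraic k c} Set.univ) ≤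
      LinearMap.range φ.toLinearMap := by
    rw [Submodule.span_le]
    rintro _ ⟨c, hc, a, -, rfl⟩
    exact ⟨(⟨c, hc⟩ : L) ⊗ₜ a, by simp [φ]⟩
  obtain ⟨z, rfl⟩ := hspan (mem_span_isAlgebraic_tmul_of_forall_derivation (R := k) hD)
  have : IsReduced (F ⊗[k] L) := isReduced_tensorProduct_of_isAlgebraic
  have : IsReduced (L ⊗[k] F) :=
    isReduced_of_injective _ (Algebra.TensorProduct.comm k L F).injective
  have hz : IsNilpotent z := (IsNilpotent.map_iff (f := φ) hφ).1 hx
  rw [hz.eq_zero, map_zero]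

theorem isReduced_tensorProduct_of_field {F : Type*} [Field F] [Algebra k F] :
    IsReduced (K ⊗[k] F) := by
  have : CharZero K := charZero_of_injective_algebraMap (algebraMap k K).injective
  rw [← nilradical_eq_bot_iff]
  by_contra hN
  obtain ⟨x, hx, hx0, hD⟩ := exists_ne_zero_forall_rTensor_eq_zero Set.univ
    (N := (nilradical (K ⊗[k] F)).restrictScalars K)
    (by rwa [Ne, Submodule.restrictScalars_eq_bot_iff])
    fun D _ x hx => isNilpotent_derivation (tensorDer D) hx
  exact hx0 (eq_zero_of_isNilpotent_of_forall_derivation hx fun D => hD D trivial)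

theorem isReduced_tensorProduct {A : Type*} [CommRing A] [IsDomain A] [Algebra k A] :
    IsReduced (K ⊗[k] A) :=
  have := isReduced_tensorProduct_of_field (k := k) (K := K) (F := FractionRing A)
  isReduced_of_injective
    (Algebra.TensorProduct.map (AlgHom.id k K) (IsScalarTower.toAlgHom k A (FractionRing A)))
    (Module.Flat.lTensor_preserves_injective_linearMap (M := K)
      (IsScalarTower.toAlgHom k A (FractionRing A)).toLinearMap
      (IsFractionRing.injective A (FractionRing A)))

end GeometricallyReduced

section IdealStable

variable {k B : Type*} [CommRing k] [CommRing B] [Algebra k B] (d : Derivation k B B)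

theorem derivation_mem_of_mem_mul {I I' J J' P : Ideal B} (hI : ∀ x ∈ I, d x ∈ I')
    (hJ : ∀ x ∈ J, d x ∈ J') (hIJ' : I * J' ≤ P) (hI'J : I' * J ≤ P) : ∀ x ∈ I * J, d x ∈ P := by
  intro x hx
  induction hx using Submodule.mul_induction_on' with
  | mem_mul_mem a ha b hb =>
    rw [d.leibniz, smul_eq_mul, smul_eq_mul, mul_comm b]
    exact add_mem (hIJ' (Ideal.mul_mem_mul ha (hJ b hb))) (hI'J (Ideal.mul_mem_mul (hI a ha) hb))
  | add a _ b _ ha hb => rw [map_add]; exact add_mem ha hb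

theorem derivation_mem_pow_of_mem_pow_succ (I : Ideal B) (n : ℕ) :
    ∀ x ∈ I ^ (n + 1), d x ∈ I ^ n := by
  induction n with
  | zero => simp
  | succ n ih =>
    rw [pow_succ]
    exact derivation_mem_of_mem_mul d ih (J' := ⊤) (fun _ _ => trivial) Ideal.mul_le_left
      (pow_succ I n).ge

theorem derivation_mem_pow_mul_of_mem_pow_succ_mul {I Q : Ideal B} (hQ : ∀ x ∈ Q, d x ∈ Q)
    (n : ℕ) : ∀ x ∈ I ^ (n + 1) * Q, d x ∈ I ^ n * Q :=
  derivation_mem_of_mem_mul d (derivation_mem_pow_of_mem_pow_succ d I n) hQ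
    (Ideal.mul_mono_left (Ideal.pow_le_pow_right n.le_succ)) le_rfl

end IdealStable

/-! ### Ideals of points -/

section DerivationAlgebraic

variable {R A M : Type*} [CommRing R] [CommRing A] [IsDomain A] [CharZero A] [Algebra R A]
  [AddCommGroup M] [Module A M] [Module.IsTorsionFree A M] [Module R M]

theorem derivation_eq_zero_of_isAlgebraic [IsDomain R] [FaithfulSMul R A] (d : Derivation R A M)
    {a : A} (ha : IsAlgebraic R a) : d a = 0 := by
  have : CharZero R := ((algebraMap R A).charZero_iff (FaithfulSMul.algebraMap_injective R A)).2
    inferInstance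
  obtain ⟨p, hp, hpa⟩ := ha
  induction hn : p.natDegree using Nat.strong_induction_on generalizing p with
  | _ n ih =>
    have hdeg : p.natDegree ≠ 0 := fun h0 => by
      obtain ⟨c, rfl⟩ := Polynomial.natDegree_eq_zero.1 h0
      rw [Polynomial.aeval_C, map_eq_zero_iff _ (FaithfulSMul.algebraMap_injective R A)] at hpa
      exact hp (by rw [hpa, map_zero])
    have hd : Polynomial.aeval a p.derivative • d a = 0 := by rw [← d.map_aeval, hpa, map_zero]
    refine (smul_eq_zero.1 hd).elim (fun h => ?_) id
    exact ih _ (hn ▸ Polynomial.natDegree_derivative_lt hdeg) p.derivative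
      (fun h0 => hdeg (Polynomial.derivative_eq_zero.1 h0)) h rfl

theorem derivation_eq_zero_of_isAlgebraic_adjoin (d : Derivation R A M) {s : Set A}
    (hs : ∀ t ∈ s, d t = 0) {a : A} (ha : IsAlgebraic (Algebra.adjoin R s) a) : d a = 0 := by
  have hS : Set.EqOn d (0 : Derivation R A M) (Algebra.adjoin R s) := Derivation.eqOn_adjoin hs
  let d' : Derivation (Algebra.adjoin R s) A M :=
    Derivation.mk'
      { toFun := d
        map_add' := map_add d
        map_smul' := fun r b => by
          rw [Algebra.smul_def, d.leibniz, RingHom.id_apply, show d (algebraMap _ A r) = 0 from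
            hS r.2, smul_zero, add_zero, algebraMap_smul] }
      d.leibniz
  exact derivation_eq_zero_of_isAlgebraic d' ha

end DerivationAlgebraic

section PointIdeal

variable {k A K : Type*} [Field k] [CommRing A] [Algebra k A] [Field K] [Algebra k K]

/-- Evaluation `K ⊗ A → K` at the `K`-point of `Spec A` given by `σ : A → K`. -/
noncomputable def evalAt (σ : A →ₐ[k] K) : K ⊗[k] A →ₐ[K] K :=
  Algebra.TensorProduct.lift (Algebra.ofId K K) σ fun _ _ => Commute.all _ _

@[simp]
theorem evalAt_tmul (σ : A →ₐ[k] K) (c : K) (a : A) : evalAt σ (c ⊗ₜ[k] a) = c * σ a := by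
  simp [evalAt]

/-- The ideal in `K ⊗ A` of the `K`-point of `Spec (K ⊗ A)` given by `σ : A → K`. -/
noncomputable def pointIdeal (σ : A →ₐ[k] K) : Ideal (K ⊗[k] A) :=
  RingHom.ker (evalAt σ)

theorem mem_pointIdeal {σ : A →ₐ[k] K} {x : K ⊗[k] A} : x ∈ pointIdeal σ ↔ evalAt σ x = 0 :=
  Iff.rfl

theorem sub_evalAt_mem_pointIdeal (σ : A →ₐ[k] K) (x : K ⊗[k] A) :
    x - algebraMap K (K ⊗[k] A) (evalAt σ x) ∈ pointIdeal σ := by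
  rw [mem_pointIdeal, map_sub, AlgHom.commutes, Algebra.algebraMap_self, RingHom.id_apply, sub_self]

/-- The linear map `a ↦ 1 ⊗ a - σ a ⊗ 1`, whose values generate the ideal of the point `σ`. -/
noncomputable def delta (σ : A →ₐ[k] K) : A →ₗ[k] K ⊗[k] A :=
  TensorProduct.mk k K A 1 - (TensorProduct.mk k K A).flip 1 ∘ₗ σ.toLinearMap

theorem delta_apply (σ : A →ₐ[k] K) (a : A) : delta σ a = 1 ⊗ₜ a - σ a ⊗ₜ 1 := rfl

theorem delta_mul (σ : A →ₐ[k] K) (a b : A) :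
    delta σ (a * b) = σ a • delta σ b + σ b • delta σ a + delta σ a * delta σ b := by
  have hone : (1 : K) ⊗ₜ[k] (a * b) = (1 ⊗ₜ a) * (1 ⊗ₜ b) := by simp
  have hσ : σ (a * b) ⊗ₜ[k] (1 : A) = (σ a ⊗ₜ 1) * (σ b ⊗ₜ 1) := by simp
  simp only [delta_apply, hone, hσ, Algebra.smul_def, Algebra.TensorProduct.algebraMap_apply,
    Algebra.algebraMap_self, RingHom.id_apply]
  ring

theorem delta_mem_pointIdeal (σ : A →ₐ[k] K) (a : A) : delta σ a ∈ pointIdeal σ := by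
  simp [mem_pointIdeal, delta_apply]

theorem pointIdeal_eq_span_delta (σ : A →ₐ[k] K) :
    pointIdeal σ = Ideal.span (Set.range (delta σ)) := by
  refine le_antisymm (fun x hx => ?_) (Ideal.span_le.2 ?_)
  · suffices x - algebraMap K (K ⊗[k] A) (evalAt σ x) ∈ Ideal.span (Set.range (delta σ)) by
      simpa [mem_pointIdeal.1 hx] using this
    clear hx
    induction x with
    | zero => simp
    | add x y hx hy => rw [map_add, map_add, add_sub_add_comm]; exact add_mem hx hy
    | tmul c a =>
      have : c ⊗ₜ[k] a - algebraMap K (K ⊗[k] A) (evalAt σ (c ⊗ₜ a)) = c ⊗ₜ 1 * delta σ a := by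
        simp [delta_apply, mul_sub]
      rw [this]
      exact Ideal.mul_mem_left _ _ (Ideal.subset_span ⟨a, rfl⟩)
  · rintro _ ⟨a, rfl⟩
    exact delta_mem_pointIdeal σ a

theorem isCoprime_pointIdeal {σ τ : A →ₐ[k] K} (h : σ ≠ τ) :
    IsCoprime (pointIdeal σ) (pointIdeal τ) := by
  obtain ⟨a, ha⟩ := DFunLike.ne_iff.1 h
  have hsub : delta τ a - delta σ a = algebraMap K (K ⊗[k] A) (σ a - τ a) := by
    simp [delta_apply, TensorProduct.sub_tmul]
  rw [Ideal.isCoprime_iff_sup_eq]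
  refine Ideal.eq_top_of_isUnit_mem _ (x := delta τ a - delta σ a)
    (sub_mem (Ideal.mem_sup_right (delta_mem_pointIdeal τ a))
      (Ideal.mem_sup_left (delta_mem_pointIdeal σ a))) ?_
  rw [hsub]
  exact (IsUnit.mk0 _ (sub_ne_zero.2 ha)).map _

theorem tensorDer_mem_pointIdeal {σ : A →ₐ[k] K} {D : Derivation k K K} (h : ∀ a, D (σ a) = 0) :
    ∀ x ∈ pointIdeal σ, tensorDer D x ∈ pointIdeal σ := by
  intro x hx
  rw [pointIdeal_eq_span_delta] at hx
  induction hx using Submodule.span_induction with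
  | zero => simp
  | add x y _ _ hx hy => rw [map_add]; exact add_mem hx hy
  | mem x hx => obtain ⟨a, rfl⟩ := hx; simp [delta_apply, h]
  | smul b x hx h' =>
    rw [smul_eq_mul, Derivation.leibniz, smul_eq_mul, smul_eq_mul]
    rw [← Ideal.span, ← pointIdeal_eq_span_delta] at hx
    exact add_mem (Ideal.mul_mem_left _ _ h') (Ideal.mul_mem_right _ _ hx)

theorem pointIdeal_le_span_delta_sup_mul_self [CharZero k] [IsDomain A] {σ : A →ₐ[k] K}
    (hσ : Function.Injective σ) {t : A} (ht : Algebra.IsAlgebraic (Algebra.adjoin k {t}) A) :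
    pointIdeal σ ≤ Ideal.span {delta σ t} ⊔ pointIdeal σ * pointIdeal σ := by
  set Q := Ideal.span {delta σ t} ⊔ pointIdeal σ * pointIdeal σ
  have : CharZero A := charZero_of_injective_algebraMap (algebraMap k A).injective
  -- Modulo `Q`, the map `delta σ` is a derivation killing `t`, if `A` acts through `σ`.
  let M := (K ⊗[k] A) ⧸ Q
  let : Module A M := Module.compHom M σ.toRingHom
  have : Module.IsTorsionFree A M := .comap σ
    (fun a ha => IsRegular.of_ne_zero ((map_ne_zero_iff σ hσ).2 ha.ne_zero)) fun _ _ => rfl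
  let d : Derivation k A M := .mk' ((Q.mkQ.restrictScalars k) ∘ₗ delta σ) fun a b => by
    change Q.mkQ (delta σ (a * b)) = σ a • Q.mkQ (delta σ b) + σ b • Q.mkQ (delta σ a)
    have hQ : delta σ a * delta σ b ∈ Q := Ideal.mem_sup_right
      (Ideal.mul_mem_mul (delta_mem_pointIdeal σ a) (delta_mem_pointIdeal σ b))
    rw [delta_mul, map_add, map_add, show Q.mkQ (delta σ a * delta σ b) = 0 from
      (Submodule.Quotient.mk_eq_zero Q).2 hQ, add_zero]
    rfl
  have hdt : d t = 0 := (Submodule.Quotient.mk_eq_zero Q).2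
    (Ideal.mem_sup_left (Ideal.mem_span_singleton_self _))
  rw [pointIdeal_eq_span_delta σ, Ideal.span_le]
  rintro _ ⟨a, rfl⟩
  exact (Submodule.Quotient.mk_eq_zero Q).1
    (derivation_eq_zero_of_isAlgebraic_adjoin d (by simpa using hdt) (ht.isAlgebraic a))

end PointIdeal

/-! ### General position -/

section GeneralPosition

theorem codisjoint_of_wcovBy {α : Type*} [Lattice α] [OrderTop α] {a b w : α} (hab : a ⩿ b)
    (hb : Codisjoint w b) (hw : ¬w ⊓ b ≤ a) : Codisjoint w a := by
  rcases hab.eq_or_eq (le_sup_left : a ≤ a ⊔ w ⊓ b) (sup_le hab.le inf_le_right) with h | h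
  · exact absurd (sup_eq_left.1 h) hw
  · rw [codisjoint_iff_le_sup, ← hb.eq_top]
    exact sup_le le_sup_left
      (h.ge.trans (sup_le le_sup_right (inf_le_left.trans le_sup_left)))

section PrincipalModulo

variable {B : Type*} [CommRing B] {I P Q : Ideal B} {p q : B}

theorem mul_le_span_mul_sup (hp : p ∈ P) (hP : P ≤ Ideal.span {p} ⊔ I * P)
    (hQ : Q ≤ Ideal.span {q} ⊔ I * Q) (hq : q ∈ Q) :
    P * Q ≤ Ideal.span {p * q} ⊔ I * (P * Q) := by
  refine (Ideal.mul_mono hP hQ).trans ?_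
  rw [Ideal.sup_mul, Ideal.mul_sup, Ideal.span_singleton_mul_span_singleton]
  refine sup_le (sup_le le_sup_left (le_sup_of_le_right ?_)) (le_sup_of_le_right ?_)
  · rw [mul_left_comm]
    exact Ideal.mul_mono_right (Ideal.mul_mono_left ((Ideal.span_singleton_le_iff_mem _).2 hp))
  · rw [mul_assoc]
    exact Ideal.mul_mono_right (Ideal.mul_mono_right
      (sup_le ((Ideal.span_singleton_le_iff_mem _).2 hq) Ideal.mul_le_right))

theorem pow_le_span_pow_sup (hp : p ∈ P) (hP : P ≤ Ideal.span {p} ⊔ I * P) (n : ℕ) :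
    P ^ n ≤ Ideal.span {p ^ n} ⊔ I * P ^ n := by
  induction n with
  | zero => simp
  | succ n ih =>
    rw [pow_succ, pow_succ]
    exact mul_le_span_mul_sup (Ideal.pow_mem_pow hp n) ih hP hp

theorem exists_le_span_sup_of_isCoprime (h : IsCoprime I Q) :
    ∃ q ∈ Q, Q ≤ Ideal.span {q} ⊔ I * Q := by
  obtain ⟨i, hi, q, hq, hiq⟩ := Ideal.isCoprime_iff_exists.1 h
  refine ⟨q, hq, fun z hz => ?_⟩
  rw [show z = z * q + i * z by linear_combination (-z) * hiq]
  exact add_mem (Ideal.mem_sup_left (Ideal.mul_mem_left _ _ (Ideal.mem_span_singleton_self q)))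
    (Ideal.mem_sup_right (Ideal.mul_mem_mul hi hz))

end PrincipalModulo

variable {k A K : Type*} [Field k] [CommRing A] [Algebra k A] [Field K] [Algebra k K]

theorem wcovBy_pointIdeal_mul (τ : A →ₐ[k] K) {P : Ideal (K ⊗[k] A)} {p : K ⊗[k] A} (hp : p ∈ P)
    (hP : P ≤ Ideal.span {p} ⊔ pointIdeal τ * P) :
    (pointIdeal τ * P).restrictScalars K ⩿ P.restrictScalars K := by
  refine (Submodule.wcovBy_span_singleton_sup p _).of_le_of_le'
    (fun x hx => ?_) ((Submodule.restrictScalars_le K).2 Ideal.mul_le_right)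
  obtain ⟨y, hy, z, hz, rfl⟩ := Submodule.mem_sup.1 (hP hx)
  obtain ⟨b, rfl⟩ := Ideal.mem_span_singleton'.1 hy
  have hb : b * p - evalAt τ b • p ∈ pointIdeal τ * P := by
    rw [Algebra.smul_def, ← sub_mul]
    exact Ideal.mul_mem_mul (sub_evalAt_mem_pointIdeal τ b) hp
  rw [show b * p + z = evalAt τ b • p + (b * p - evalAt τ b • p + z) by ring]
  exact add_mem
    (Submodule.mem_sup_left (Submodule.smul_mem _ _ (Submodule.mem_span_singleton_self p)))
    (Submodule.mem_sup_right (add_mem hb hz))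

theorem isAlgebraic_tensorProduct_of_mem_span [Nontrivial A] {R : Subalgebra k K}
    [Algebra (R ⊗[k] A) (K ⊗[k] A)] [IsDomain (R ⊗[k] A)]
    (halg : algebraMap (R ⊗[k] A) (K ⊗[k] A) =
      (Algebra.TensorProduct.map R.val (AlgHom.id k A)).toRingHom) {x : K ⊗[k] A}
    (hx : x ∈ Submodule.span k (Set.image2 (· ⊗ₜ[k] ·) {c : K | IsAlgebraic R c} Set.univ)) :
    IsAlgebraic (R ⊗[k] A) x := by
  have hsmul : ∀ (c : k) (x : K ⊗[k] A),
      c • x = algebraMap (R ⊗[k] A) (K ⊗[k] A) (algebraMap k _ c) * x := fun c x => by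
    rw [halg, Algebra.smul_def]
    congr 1
  induction hx using Submodule.span_induction with
  | zero => exact isAlgebraic_zero
  | add x y _ _ hx hy => exact hx.add hy
  | smul c x _ hx => rw [hsmul]; exact (isAlgebraic_algebraMap _).mul hx
  | mem x hx =>
    obtain ⟨c, hc, a, -, rfl⟩ := hx
    have hca : c ⊗ₜ[k] a =
        (c ⊗ₜ 1) * algebraMap (R ⊗[k] A) (K ⊗[k] A) (1 ⊗ₜ a) := by
      simp [halg]
    change IsAlgebraic _ (c ⊗ₜ[k] a)
    rw [hca]
    refine .mul ?_ (isAlgebraic_algebraMap _)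
    exact IsAlgebraic.ringHom_of_comp_eq
      (f := (Algebra.TensorProduct.includeLeft : R →ₐ[k] R ⊗[k] A))
      (g := (Algebra.TensorProduct.includeLeft : K →ₐ[k] K ⊗[k] A)) hc
      (Algebra.TensorProduct.includeLeft_injective (algebraMap k A).injective)
      (RingHom.ext fun r => by simp [halg])

theorem evalAt_map_val (R : Subalgebra k K) (τ : A →ₐ[k] K) (z : R ⊗[k] A) :
    evalAt τ (Algebra.TensorProduct.map R.val (AlgHom.id k A) z) =
      Algebra.TensorProduct.productMap R.val τ z := by
  induction z with
  | zero => simp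
  | add x y hx hy => rw [map_add, map_add, map_add, hx, hy]
  | tmul r a => simp

theorem rTensor_mem_baseChange {M : Type*} [AddCommGroup M] [Module k M] (W : Submodule k M)
    (f : K →ₗ[k] K) {x : K ⊗[k] M} (hx : x ∈ W.baseChange K) :
    f.rTensor M x ∈ W.baseChange K := by
  obtain ⟨y, rfl⟩ := hx
  induction y with
  | zero => simp
  | add y₁ y₂ h₁ h₂ => rw [map_add, map_add]; exact add_mem h₁ h₂
  | tmul c w => exact Submodule.tmul_mem_baseChange_of_mem _ w.2

theorem disjoint_or_codisjoint_of_surjective (hA : Function.Surjective (algebraMap k A))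
    (W : Submodule K (K ⊗[k] A)) (J : Ideal (K ⊗[k] A)) :
    Disjoint W (J.restrictScalars K) ∨ Codisjoint W (J.restrictScalars K) := by
  have hsurj : Function.Surjective (algebraMap K (K ⊗[k] A)) :=
    Algebra.TensorProduct.includeLeft_surjective K K hA
  rw [← Ideal.map_comap_of_surjective _ hsurj J]
  rcases Ideal.eq_bot_or_top (J.comap (algebraMap K (K ⊗[k] A))) with h | h
  · exact Or.inl (by rw [h, Ideal.map_bot]; exact disjoint_bot_right)
  · exact Or.inr (by rw [h, Ideal.map_top]; exact codisjoint_top_right)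

variable [IsDomain (K ⊗[k] A)]

theorem evalAt_ne_zero_of_mem_span_isAlgebraic {τ : A →ₐ[k] K} {R : Subalgebra k K}
    (hinj : Function.Injective (Algebra.TensorProduct.productMap R.val τ)) {x : K ⊗[k] A}
    (hx : x ∈ Submodule.span k (Set.image2 (· ⊗ₜ[k] ·) {c : K | IsAlgebraic R c} Set.univ))
    (hx0 : x ≠ 0) : evalAt τ x ≠ 0 := by
  intro hev
  let φ : R ⊗[k] A →ₐ[k] K ⊗[k] A := Algebra.TensorProduct.map R.val (AlgHom.id k A)
  have hφ : Function.Injective φ := Module.Flat.rTensor_preserves_injective_linearMap (M := A)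
    R.val.toLinearMap Subtype.val_injective
  let : Algebra (R ⊗[k] A) (K ⊗[k] A) := φ.toRingHom.toAlgebra
  have : IsDomain (R ⊗[k] A) := hφ.isDomain φ.toRingHom
  have : Nontrivial A :=
    (Algebra.TensorProduct.includeRight : A →ₐ[k] K ⊗[k] A).toRingHom.domain_nontrivial
  refine Ideal.comap_ne_bot_of_algebraic_mem hx0 (mem_pointIdeal.2 hev)
    (isAlgebraic_tensorProduct_of_mem_span rfl hx) (eq_bot_iff.2 fun z hz => ?_)
  exact hinj ((evalAt_map_val R τ z).symm.trans hz |>.trans (map_zero _).symm)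

theorem not_inf_le_pointIdeal_mul [CharZero k] {τ : A →ₐ[k] K} {R : Subalgebra k K}
    (hinj : Function.Injective (Algebra.TensorProduct.productMap R.val τ)) {Q : Ideal (K ⊗[k] A)}
    (hQ : ∀ D : Derivation R K K, ∀ x ∈ Q, tensorDer (D.restrictScalars k) x ∈ Q) (n : ℕ)
    {W : Submodule k A}
    (hW : ¬Disjoint (W.baseChange K) ((pointIdeal τ ^ n * Q).restrictScalars K)) :
    ¬W.baseChange K ⊓ (pointIdeal τ ^ n * Q).restrictScalars K ≤
      (pointIdeal τ * (pointIdeal τ ^ n * Q)).restrictScalars K := by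
  have : CharZero K := charZero_of_injective_algebraMap (algebraMap k K).injective
  intro hle
  obtain ⟨x, hx, hx0, hxD⟩ := exists_ne_zero_forall_rTensor_eq_zero
    (Set.range fun D : Derivation R K K => D.restrictScalars k) (mt disjoint_iff.2 hW) (by
      rintro _ ⟨D, rfl⟩ x hx
      refine ⟨rTensor_mem_baseChange W _ hx.1, ?_⟩
      have hxJ := hle hx
      rw [← mul_assoc, ← pow_succ'] at hxJ
      exact derivation_mem_pow_mul_of_mem_pow_succ_mul _ (hQ D) n x hxJ)
  refine evalAt_ne_zero_of_mem_span_isAlgebraic hinj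
    (mem_span_isAlgebraic_tmul_of_forall_derivation fun D => hxD _ ⟨D, rfl⟩) hx0 ?_
  exact mem_pointIdeal.1 (Ideal.mul_le_left (hle hx))

end GeneralPosition

section GenericFamily

variable {k A K ι : Type*} [Field k] [CommRing A] [Algebra k A] [Field K] [Algebra k K]

/-- A family of `K`-points of `Spec A` is generic if every member is generic over a subalgebra
of `K` over which all the other members are defined. -/
def IsGenericFamily (σ : ι → A →ₐ[k] K) : Prop :=
  ∀ i, ∃ R : Subalgebra k K, (∀ j ≠ i, ∀ a, σ j a ∈ R) ∧
    Function.Injective (Algebra.TensorProduct.productMap R.val (σ i))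

variable {σ : ι → A →ₐ[k] K}

theorem IsGenericFamily.injective (h : IsGenericFamily σ) (i : ι) : Function.Injective (σ i) := by
  obtain ⟨R, -, hR⟩ := h i
  intro a b hab
  exact Algebra.TensorProduct.includeRight_injective (algebraMap k R).injective
    (hR (by simpa using hab))

theorem IsGenericFamily.ne (h : IsGenericFamily σ) {a : A} (ha : a ∉ Set.range (algebraMap k A))
    {i j : ι} (hij : i ≠ j) : σ i ≠ σ j := by
  obtain ⟨R, hR, hinj⟩ := h i
  intro he
  have hcoord : (1 : R) ⊗ₜ[k] a = (⟨σ j a, hR j hij.symm a⟩ : R) ⊗ₜ[k] (1 : A) :=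
    hinj (by simp [he])
  obtain ⟨l, hla, hl⟩ := Submodule.exists_le_ker_of_notMem (p := (1 : Submodule k A)) (v := a)
    (by rwa [Submodule.mem_one])
  have hl1 : l 1 = 0 := hl (Submodule.one_le.1 le_rfl)
  have := congrArg (fun x => (TensorProduct.rid k R) (LinearMap.lTensor R l x)) hcoord
  simp only [LinearMap.lTensor_tmul, TensorProduct.rid_tmul, hl1, zero_smul] at this
  exact smul_ne_zero hla one_ne_zero this

theorem prod_pointIdeal_eq_pow_mul (hne : Function.Injective σ) (i : ι) {R : Subalgebra k K}
    (hR : ∀ j ≠ i, ∀ a, σ j a ∈ R) (s : Multiset ι) :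
    ∃ (n : ℕ) (Q : Ideal (K ⊗[k] A)), (s.map fun j => pointIdeal (σ j)).prod =
        pointIdeal (σ i) ^ n * Q ∧ IsCoprime (pointIdeal (σ i)) Q ∧
      ∀ D : Derivation R K K, ∀ x ∈ Q, tensorDer (D.restrictScalars k) x ∈ Q := by
  induction s using Multiset.induction_on with
  | empty => exact ⟨0, 1, by simp, isCoprime_one_right, by simp⟩
  | cons j s ih =>
    obtain ⟨n, Q, hs, hcop, hD⟩ := ih
    rw [Multiset.map_cons, Multiset.prod_cons, hs]
    by_cases hj : j = i
    · exact ⟨n + 1, Q, by rw [hj, pow_succ', mul_assoc], hcop, hD⟩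
    · refine ⟨n, pointIdeal (σ j) * Q, by rw [mul_left_comm],
        (isCoprime_pointIdeal (hne.ne (Ne.symm hj))).mul_right hcop, fun D => ?_⟩
      exact derivation_mem_of_mem_mul _
        (tensorDer_mem_pointIdeal fun a => D.map_algebraMap ⟨σ j a, hR j hj a⟩) (hD D) le_rfl le_rfl

variable [CharZero k] [IsDomain (K ⊗[k] A)] {t : A}

theorem IsGenericFamily.disjoint_or_codisjoint_multiset_prod (h : IsGenericFamily σ)
    (hne : Function.Injective σ) (ht : Algebra.IsAlgebraic (Algebra.adjoin k {t}) A)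
    (W : Submodule k A) (s : Multiset ι) :
    Disjoint (W.baseChange K)
        (((s.map fun i => pointIdeal (σ i)).prod).restrictScalars K) ∨
      Codisjoint (W.baseChange K)
        (((s.map fun i => pointIdeal (σ i)).prod).restrictScalars K) := by
  have : IsDomain A := (Algebra.TensorProduct.includeRight_injective (A := K) (B := A)
    (algebraMap k K).injective).isDomain Algebra.TensorProduct.includeRight.toRingHom
  induction s using Multiset.induction_on with
  | empty => exact Or.inr (by simp)
  | cons i s ih =>
    obtain ⟨R, hR, hinj⟩ := h i
    obtain ⟨n, Q, hs, hcop, hD⟩ := prod_pointIdeal_eq_pow_mul hne i hR s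
    rw [Multiset.map_cons, Multiset.prod_cons, hs]
    rw [hs] at ih
    by_cases hW : Disjoint (W.baseChange K) ((pointIdeal (σ i) ^ n * Q).restrictScalars K)
    · exact Or.inl (hW.mono_right ((Submodule.restrictScalars_le K).2 Ideal.mul_le_right))
    · obtain ⟨q, hq, hQ⟩ := exists_le_span_sup_of_isCoprime hcop
      have hτ := delta_mem_pointIdeal (σ i) t
      have hpow := pow_le_span_pow_sup hτ
        (pointIdeal_le_span_delta_sup_mul_self (h.injective i) ht) n
      have hτn := Ideal.pow_mem_pow hτ n
      exact Or.inr (codisjoint_of_wcovBy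
        (wcovBy_pointIdeal_mul (σ i) (Ideal.mul_mem_mul hτn hq)
          (mul_le_span_mul_sup hτn hpow hQ hq))
        (ih.resolve_left hW) (not_inf_le_pointIdeal_mul hinj hD n hW))

theorem IsGenericFamily.disjoint_or_codisjoint_prod [Fintype ι] (h : IsGenericFamily σ)
    (ht : Algebra.IsAlgebraic (Algebra.adjoin k {t}) A) (W : Submodule k A) (m : ι → ℕ) :
    Disjoint (W.baseChange K) ((∏ i, pointIdeal (σ i) ^ m i).restrictScalars K) ∨
      Codisjoint (W.baseChange K) ((∏ i, pointIdeal (σ i) ^ m i).restrictScalars K) := by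
  by_cases hA : Function.Surjective (algebraMap k A)
  · exact disjoint_or_codisjoint_of_surjective hA _ _
  · obtain ⟨a, ha⟩ := not_forall.1 hA
    have hne : Function.Injective σ := fun i j hij => by_contra fun h' => h.ne ha h' hij
    have hprod : ((∑ i, Multiset.replicate (m i) i).map fun i => pointIdeal (σ i)).prod =
        ∏ i, pointIdeal (σ i) ^ m i := by
      simp [← Multiset.coe_mapAddMonoidHom, map_sum, Multiset.prod_sum]
    rw [← hprod]
    exact h.disjoint_or_codisjoint_multiset_prod hne ht W _

end GenericFamily

section KrullDimension

theorem ringKrullDim_le_of_isIntegral {R S : Type*} [CommRing R] [CommRing S] [Algebra R S]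
    [FaithfulSMul R S] [Algebra.IsIntegral R S] : ringKrullDim R ≤ ringKrullDim S := by
  refine iSup_le fun l => ?_
  obtain ⟨P, hP, hPl⟩ := (l.head.asIdeal.nonempty_primesOver (S := S)).some
  obtain ⟨L, hL, -⟩ := Ideal.exists_ltSeries_of_hasGoingUp l P
  exact hL ▸ Order.LTSeries.length_le_krullDim L

theorem exists_isAlgebraic_adjoin_singleton {k A : Type*} [Field k] [CommRing A] [IsDomain A]
    [Algebra k A] [Algebra.FiniteType k A] (h : ringKrullDim A ≤ 1) :
    ∃ t : A, Algebra.IsAlgebraic (Algebra.adjoin k {t}) A := by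
  obtain ⟨s, g, hg, hg_int⟩ := exists_integral_inj_algHom_of_fg k A
  have hs : s ≤ 1 := by
    let : Algebra (MvPolynomial (Fin s) k) A := g.toRingHom.toAlgebra
    have : FaithfulSMul (MvPolynomial (Fin s) k) A :=
      (faithfulSMul_iff_algebraMap_injective _ _).2 hg
    have : Algebra.IsIntegral (MvPolynomial (Fin s) k) A := ⟨hg_int⟩
    have hdim := MvPolynomial.ringKrullDim_of_isNoetherianRing (R := k) (ι := Fin s)
    rw [ringKrullDim_eq_zero_of_field, zero_add, Nat.card_fin] at hdim
    exact_mod_cast hdim.ge.trans (ringKrullDim_le_of_isIntegral.trans h)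
  have : Subsingleton (Fin s) := Fin.subsingleton_iff_le_one.2 hs
  obtain ⟨t, ht⟩ : ∃ t, Set.range (g ∘ MvPolynomial.X) ⊆ {t} := by
    obtain h | ⟨t, ht⟩ := (Set.subsingleton_range (g ∘ MvPolynomial.X)).eq_empty_or_singleton
    · exact ⟨0, h ▸ Set.empty_subset _⟩
    · exact ⟨t, ht.le⟩
  have hrange : ∀ p, g p ∈ Algebra.adjoin k {t} := fun p => Algebra.adjoin_mono ht <| by
    rw [Algebra.adjoin_range_eq_range_aeval, ← MvPolynomial.aeval_unique]
    exact ⟨p, rfl⟩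
  have : Algebra.IsIntegral (Algebra.adjoin k {t}) A :=
    ⟨RingHom.IsIntegral.tower_top (g.codRestrict _ hrange).toRingHom _ hg_int⟩
  exact ⟨t, inferInstance⟩

end KrullDimension

section GenericStep

variable {k A K L S : Type*} [Field k] [CommRing A] [Algebra k A] [Field K] [Algebra k K]
  [Field L] [Algebra k L] [CommRing S] [Algebra k S]

theorem productMap_range_val_injective {f : S →ₐ[k] L} {g : A →ₐ[k] L}
    (h : Function.Injective (Algebra.TensorProduct.productMap f g)) :
    Function.Injective (Algebra.TensorProduct.productMap f.range.val g) := by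
  have hcomp : (Algebra.TensorProduct.productMap f.range.val g).comp
      (Algebra.TensorProduct.map f.rangeRestrict (AlgHom.id k A)) =
      Algebra.TensorProduct.productMap f g := by
    ext <;> simp
  have hsurj : Function.Surjective
      (Algebra.TensorProduct.map f.rangeRestrict (AlgHom.id k A)) :=
    TensorProduct.map_surjective f.rangeRestrict_surjective Function.surjective_id
  rw [← hcomp, AlgHom.coe_comp] at h
  exact h.of_comp_right hsurj

theorem productMap_productMap_injective {s : S →ₐ[k] K} {ρ : A →ₐ[k] K} {τ : K →ₐ[k] L}
    {σ₀ : A →ₐ[k] L} (h₁ : Function.Injective (Algebra.TensorProduct.productMap s ρ))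
    (h₂ : Function.Injective (Algebra.TensorProduct.productMap τ σ₀)) :
    Function.Injective (Algebra.TensorProduct.productMap
      (Algebra.TensorProduct.productMap (τ.comp s) σ₀) (τ.comp ρ)) := by
  let swap : (S ⊗[k] A) ⊗[k] A ≃ₐ[k] (S ⊗[k] A) ⊗[k] A :=
    ((Algebra.TensorProduct.assoc k k k S A A).trans
      (Algebra.TensorProduct.congr .refl (Algebra.TensorProduct.comm k A A))).trans
      (Algebra.TensorProduct.assoc k k k S A A).symm
  have hmap : Function.Injective (Algebra.TensorProduct.map
      (Algebra.TensorProduct.productMap s ρ) (AlgHom.id k A)) :=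
    Module.Flat.rTensor_preserves_injective_linearMap
      (Algebra.TensorProduct.productMap s ρ).toLinearMap h₁
  have hcomp : Algebra.TensorProduct.productMap
      (Algebra.TensorProduct.productMap (τ.comp s) σ₀) (τ.comp ρ) =
      (Algebra.TensorProduct.productMap τ σ₀).comp
        ((Algebra.TensorProduct.map (Algebra.TensorProduct.productMap s ρ) (AlgHom.id k A)).comp
          swap.toAlgHom) := by
    ext <;> simp [swap, Algebra.TensorProduct.one_def]
  rw [hcomp]
  exact h₂.comp (hmap.comp swap.injective)

theorem IsGenericFamily.cons {r : ℕ} {σ : Fin r → A →ₐ[k] K} (h : IsGenericFamily σ)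
    (τ : K →ₐ[k] L) (σ₀ : A →ₐ[k] L)
    (hinj : Function.Injective (Algebra.TensorProduct.productMap τ σ₀)) :
    IsGenericFamily (Fin.cons σ₀ (fun i => τ.comp (σ i)) : Fin (r + 1) → A →ₐ[k] L) := by
  refine Fin.cases ?_ fun i => ?_
  · refine ⟨τ.range, fun j hj a => ?_, productMap_range_val_injective hinj⟩
    obtain ⟨j, rfl⟩ := Fin.exists_succ_eq.2 hj
    exact ⟨σ j a, rfl⟩
  · obtain ⟨R, hR, hRinj⟩ := h i
    refine ⟨(Algebra.TensorProduct.productMap (τ.comp R.val) σ₀).range,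
      Fin.cases (fun _ a => ⟨1 ⊗ₜ a, by simp⟩) fun j hj a =>
        ⟨(⟨σ j a, hR j (fun h => hj (congrArg Fin.succ h)) a⟩ : R) ⊗ₜ 1, by simp⟩,
      productMap_range_val_injective (productMap_productMap_injective hRinj hinj)⟩

end GenericStep

/-! ### Generic points -/

section Projective

attribute [local instance] MvPolynomial.gradedAlgebra

theorem algebraMap_homogeneousSubmodule_zero_surjective (k : Type u) [Field k] (n : ℕ) :
    Function.Surjective (algebraMap k (MvPolynomial.homogeneousSubmodule (Fin (n + 1)) k 0)) := by
  rintro ⟨p, hp⟩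
  rw [MvPolynomial.mem_homogeneousSubmodule] at hp
  have := MvPolynomial.totalDegree_eq_zero_iff_eq_C.1 (Nat.le_zero.1 hp.totalDegree_le)
  exact ⟨p.coeff 0, Subtype.ext this.symm⟩

instance locallyOfFiniteType_projSpaceStr (k : Type u) [Field k] (n : ℕ) :
    LocallyOfFiniteType (projSpaceStr k n) := by
  have : IsScalarTower k (MvPolynomial.homogeneousSubmodule (Fin (n + 1)) k 0)
      (MvPolynomial (Fin (n + 1)) k) :=
    ⟨fun a b c => smul_mul_assoc a (b : MvPolynomial (Fin (n + 1)) k) c⟩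
  have : Algebra.FiniteType (MvPolynomial.homogeneousSubmodule (Fin (n + 1)) k 0)
      (MvPolynomial (Fin (n + 1)) k) := .of_restrictScalars_finiteType k _ _
  have := IsClosedImmersion.spec_of_surjective
    (CommRingCat.ofHom (algebraMap k (MvPolynomial.homogeneousSubmodule (Fin (n + 1)) k 0)))
    (algebraMap_homogeneousSubmodule_zero_surjective k n)
  unfold projSpaceStr
  infer_instance

end Projective

section Geometric

variable {k : Type u} [Field k] {C : Scheme.{u}} {f : C ⟶ Spec (.of k)}

theorem IsQuasiProjective.locallyOfFiniteType (h : IsQuasiProjective f) :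
    LocallyOfFiniteType f := by
  obtain ⟨n, i, hi, rfl⟩ := h
  infer_instance

theorem isReduced_pullback_Spec_of_isDomain [CharZero k] {R : CommRingCat.{u}} [IsDomain R]
    (g : Spec R ⟶ Spec (.of k)) (K : Type u) [Field K] [Algebra k K] :
    IsReduced (pullback g (Spec.map (CommRingCat.ofHom (algebraMap k K)))) := by
  obtain ⟨φ, rfl⟩ := Spec.map_surjective g
  let : Algebra k R := φ.hom.toAlgebra
  have : _root_.IsReduced (K ⊗[k] R) := isReduced_tensorProduct
  have : _root_.IsReduced (R ⊗[k] K) :=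
    isReduced_of_injective _ (Algebra.TensorProduct.comm k R K).injective
  exact isReduced_of_isOpenImmersion (pullbackSpecIso k R K).hom

theorem geometricallyReduced_of_charZero [CharZero k] [IsIntegral C] :
    GeometricallyReduced f := by
  refine ⟨geometrically_iff_of_commRing_of_isClosedUnderIsomorphisms.2 fun K _ _ => ?_⟩
  let 𝒰 := Scheme.Pullback.openCoverOfLeft C.affineOpenCover.openCover f
    (Spec.map (CommRingCat.ofHom (algebraMap k K)))
  have : ∀ i, IsReduced (𝒰.X i) := fun i => by
    let q : Spec (C.affineOpenCover.X i) ⟶ C := C.affineOpenCover.f i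
    let P : Scheme.{u} := pullback (q ≫ f) (Spec.map (CommRingCat.ofHom (algebraMap k K)))
    change IsReduced P
    have : IsOpenImmersion q := C.affineOpenCover.map_prop i
    rcases isEmpty_or_nonempty (Spec (C.affineOpenCover.X i)) with h | h
    · have : IsEmpty P := Function.isEmpty (pullback.fst (q ≫ f) _)
      have : ∀ x : P, _root_.IsReduced (P.presheaf.stalk x) := isEmptyElim
      exact isReduced_of_isReduced_stalk P
    · have : IsDomain (C.affineOpenCover.X i) :=
        (affine_isIntegral_iff _).1 (isIntegral_of_isOpenImmersion q)
      exact isReduced_pullback_Spec_of_isDomain (q ≫ f) K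
  exact IsReduced.of_openCover _ 𝒰

theorem geometricallyIntegral_of_charZero [CharZero k] [GeometricallyIrreducible f]
    [IsReduced C] : GeometricallyIntegral f := by
  have : IrreducibleSpace C := GeometricallyIrreducible.irreducibleSpace_of_subsingleton f
  have : IsIntegral C := isIntegral_of_irreducibleSpace_of_isReduced C
  have : GeometricallyReduced f := geometricallyReduced_of_charZero
  exact .of_geometricallyReduced_of_geometricallyIrreducible f

instance locallyOfFiniteType_power (r : ℕ) [LocallyOfFiniteType f] :
    LocallyOfFiniteType (power f r).hom := by
  induction r with
  | zero => exact inferInstanceAs (LocallyOfFiniteType (𝟙 _))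
  | succ r ih => exact inferInstanceAs (LocallyOfFiniteType (pullback.fst f (power f r).hom ≫ f))

instance isLocallyNoetherian_power (r : ℕ) [LocallyOfFiniteType f] :
    IsLocallyNoetherian (power f r).left :=
  LocallyOfFiniteType.isLocallyNoetherian (power f r).hom

instance isIntegral_power [LocallyOfFiniteType f] [GeometricallyIntegral f] (r : ℕ) :
    IsIntegral (power f r).left := by
  induction r with
  | zero => exact inferInstanceAs (IsIntegral (Spec (CommRingCat.of k)))
  | succ r ih => exact inferInstanceAs (IsIntegral (pullback f (power f r).hom))

theorem Spec_map_algebraMap_genericField [GeometricallyIrreducible f] (r : ℕ) :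
    Spec.map (CommRingCat.ofHom (algebraMap k (genericField f r))) =
      genericPt f r ≫ (power f r).hom :=
  Spec.map_preimage _

end Geometric

section FractionRing

variable {k R K A L : Type*} [Field k] [CommRing R] [Field K] [CommRing A] [CommRing L]
  [Algebra k R] [Algebra k K] [Algebra k A] [Algebra k L] [Algebra R K] [IsScalarTower k R K]
  [IsFractionRing R K]

theorem exists_mul_eq_map_fractionRing (z : K ⊗[k] A) :
    ∃ s ∈ nonZeroDivisors R, ∃ y : R ⊗[k] A, (algebraMap R K s ⊗ₜ[k] (1 : A)) * z =
      Algebra.TensorProduct.map (IsScalarTower.toAlgHom k R K) (AlgHom.id k A) y := by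
  induction z with
  | zero => exact ⟨1, one_mem _, 0, by simp⟩
  | tmul x a =>
    obtain ⟨⟨b, s⟩, hs⟩ := IsLocalization.surj (nonZeroDivisors R) x
    exact ⟨s, s.2, b ⊗ₜ a, by simp [← hs, mul_comm]⟩
  | add z w hz hw =>
    obtain ⟨s, hs, y, hy⟩ := hz
    obtain ⟨t, ht, y', hy'⟩ := hw
    refine ⟨s * t, mul_mem hs ht, (t ⊗ₜ 1) * y + (s ⊗ₜ 1) * y', ?_⟩
    rw [map_add, map_mul _ (t ⊗ₜ 1), map_mul _ (s ⊗ₜ 1), ← hy, ← hy']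
    simp only [Algebra.TensorProduct.map_tmul, map_one, IsScalarTower.coe_toAlgHom', map_mul]
    rw [mul_add, ← mul_assoc, ← mul_assoc]
    simp [mul_comm]

theorem productMap_injective_of_isFractionRing (τ : K →ₐ[k] L) (σ : A →ₐ[k] L)
    (h : Function.Injective (Algebra.TensorProduct.productMap
      (τ.comp (IsScalarTower.toAlgHom k R K)) σ)) :
    Function.Injective (Algebra.TensorProduct.productMap τ σ) := by
  refine (injective_iff_map_eq_zero _).2 fun z hz => ?_
  obtain ⟨s, hs, y, hy⟩ := exists_mul_eq_map_fractionRing (R := R) z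
  have hcomp : (Algebra.TensorProduct.productMap τ σ).comp (Algebra.TensorProduct.map
      (IsScalarTower.toAlgHom k R K) (AlgHom.id k A)) =
      Algebra.TensorProduct.productMap (τ.comp (IsScalarTower.toAlgHom k R K)) σ := by
    ext <;> simp
  have hy0 : y = 0 := by
    apply h
    rw [map_zero, ← hcomp, AlgHom.comp_apply, ← hy, map_mul, hz, mul_zero]
  have : Nontrivial R := (IsFractionRing.nontrivial_iff_nontrivial R K).2 inferInstance
  have hs0 : algebraMap R K s ≠ 0 :=
    IsLocalization.to_map_ne_zero_of_mem_nonZeroDivisors K le_rfl hs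
  calc z = ((algebraMap R K s)⁻¹ ⊗ₜ 1) * ((algebraMap R K s ⊗ₜ 1) * z) := by
        rw [← mul_assoc]; simp [hs0, ← Algebra.TensorProduct.one_def]
    _ = 0 := by rw [hy, hy0, map_zero, mul_zero]

end FractionRing

section GenericPoint

theorem exists_Spec_map_comp_fromSpecStalk_eq {X : Scheme.{u}} {L : CommRingCat.{u}}
    [IsLocalRing L] (g : Spec L ⟶ X) {x : X} (h : g (IsLocalRing.closedPoint L) = x) :
    ∃ τ : X.presheaf.stalk x ⟶ L, Spec.map τ ≫ X.fromSpecStalk x = g := by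
  subst h
  exact ⟨Scheme.stalkClosedPointTo g, Scheme.Spec_stalkClosedPointTo_fromSpecStalk g⟩

theorem exists_Spec_map_comp_eq {X : Scheme.{u}} {A L : CommRingCat.{u}} (j : Spec A ⟶ X)
    [IsOpenImmersion j] (g : Spec L ⟶ X) (h : Set.range g ⊆ Set.range j) :
    ∃ σ : A ⟶ L, Spec.map σ ≫ j = g :=
  ⟨Spec.preimage (IsOpenImmersion.lift j g h), by
    rw [Spec.map_preimage, IsOpenImmersion.lift_fac]⟩

theorem exists_algHom_of_Spec_map {k : Type u} {A L : CommRingCat.{u}} [CommRing k]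
    [Algebra k A] [Algebra k L] (σ : A ⟶ L)
    (h : Spec.map σ ≫ Spec.map (CommRingCat.ofHom (algebraMap k A)) =
      Spec.map (CommRingCat.ofHom (algebraMap k L))) :
    ∃ σ' : A →ₐ[k] L, CommRingCat.ofHom σ'.toRingHom = σ := by
  rw [← Spec.map_comp] at h
  exact ⟨{ σ.hom with commutes' := fun x => congr($(Spec.map_injective h) x) }, rfl⟩

theorem genericPoint_mem_range {X Y : Scheme.{u}} (q : Y ⟶ X) [IsOpenImmersion q]
    [IrreducibleSpace X] [Nonempty Y] : genericPoint X ∈ Set.range q :=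
  ((genericPoint_spec X).mem_open_set_iff q.isOpenEmbedding.isOpen_range).2
    (by simpa using Set.range_nonempty q)

theorem map_genericPoint {X Y : Scheme.{u}} (q : X ⟶ Y) [IsDominant q]
    [IrreducibleSpace X] [IrreducibleSpace Y] : q (genericPoint X) = genericPoint Y := by
  refine ((genericPoint_spec Y).eq ?_).symm
  convert! (genericPoint_spec X).image q.continuous
  rw [Set.image_univ, q.denseRange.closure_eq]

theorem isDominant_fromSpecStalk_genericPoint (X : Scheme.{u}) [IrreducibleSpace X] :
    IsDominant (X.fromSpecStalk (genericPoint X)) :=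
  ⟨dense_iff_closure_eq.2 <| Set.eq_univ_of_univ_subset <|
    (genericPoint_spec X).def.ge.trans <| closure_mono <| Set.singleton_subset_iff.2
      ⟨IsLocalRing.closedPoint _, Scheme.fromSpecStalk_closedPoint⟩⟩

theorem injective_of_isDominant_Spec_map {R S : CommRingCat.{u}} [_root_.IsReduced R] (ψ : R ⟶ S)
    [IsDominant (Spec.map ψ)] : Function.Injective ψ := by
  have h := (PrimeSpectrum.denseRange_comap_iff_ker_le_nilRadical ψ.hom).1
    (Spec.map ψ).denseRange
  rw [nilradical_eq_zero] at h
  exact (RingHom.injective_iff_ker_eq_bot _).2 (le_bot_iff.1 h)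

end GenericPoint

section TensorToPullback

variable {k : Type u} [CommRing k] {C P : Scheme.{u}} {f : C ⟶ Spec (.of k)} {p : P ⟶ Spec (.of k)}
  {A R : Type u} [CommRing A] [Algebra k A] [CommRing R] [Algebra k R]
  {j : Spec (.of A) ⟶ C} (hj : j ≫ f = Spec.map (CommRingCat.ofHom (algebraMap k A)))
  {w : Spec (.of R) ⟶ P} (hw : w ≫ p = Spec.map (CommRingCat.ofHom (algebraMap k R)))

/-- The morphism `Spec (R ⊗ A) ⟶ C × P` induced by `Spec A ⟶ C` and `Spec R ⟶ P`. The factors are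
swapped so that `K ⊗ A` carries its `K`-module structure from the left. -/
noncomputable def tensorToPullback : Spec (.of (R ⊗[k] A)) ⟶ pullback f p :=
  pullback.lift (Spec.map (CommRingCat.ofHom
      (Algebra.TensorProduct.includeRight (R := k) (A := R) (B := A)).toRingHom) ≫ j)
    (Spec.map (CommRingCat.ofHom Algebra.TensorProduct.includeLeftRingHom) ≫ w) (by
      rw [Category.assoc, Category.assoc, hj, hw, ← Spec.map_comp, ← Spec.map_comp,
        ← CommRingCat.ofHom_comp, ← CommRingCat.ofHom_comp]
      congr 2
      ext x
      exact (Algebra.TensorProduct.includeRight (R := k) (A := R) (B := A)).commutes x)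

theorem tensorToPullback_fst : tensorToPullback hj hw ≫ pullback.fst f p =
    Spec.map (CommRingCat.ofHom
      (Algebra.TensorProduct.includeRight (R := k) (A := R) (B := A)).toRingHom) ≫ j :=
  pullback.lift_fst _ _ _

theorem tensorToPullback_snd : tensorToPullback hj hw ≫ pullback.snd f p =
    Spec.map (CommRingCat.ofHom Algebra.TensorProduct.includeLeftRingHom) ≫ w :=
  pullback.lift_snd _ _ _

instance isOpenImmersion_tensorToPullback [IsOpenImmersion j] [IsOpenImmersion w] :
    IsOpenImmersion (tensorToPullback hj hw) := by
  have : tensorToPullback hj hw = (pullbackSpecIso k R A).inv ≫ (pullbackSymmetry _ _).hom ≫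
      pullback.map _ _ f p j w (𝟙 _) (by rw [hj, Category.comp_id])
        (by rw [hw, Category.comp_id]) := by
    apply pullback.hom_ext
    · rw [tensorToPullback_fst, Category.assoc, Category.assoc, pullback.map, pullback.lift_fst,
        pullbackSymmetry_hom_comp_fst_assoc, pullbackSpecIso_inv_snd_assoc]
      rfl
    · rw [tensorToPullback_snd, Category.assoc, Category.assoc, pullback.map, pullback.lift_snd,
        pullbackSymmetry_hom_comp_snd_assoc, pullbackSpecIso_inv_fst_assoc]
  rw [this]
  infer_instance

theorem Spec_map_productMap_comp_tensorToPullback {E : Type u} [CommRing E] [Algebra k E]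
    (τ : R →ₐ[k] E) (σ : A →ₐ[k] E) {g : Spec (.of E) ⟶ pullback f p}
    (hτ : Spec.map (CommRingCat.ofHom τ.toRingHom) ≫ w = g ≫ pullback.snd f p)
    (hσ : Spec.map (CommRingCat.ofHom σ.toRingHom) ≫ j = g ≫ pullback.fst f p) :
    Spec.map (CommRingCat.ofHom (Algebra.TensorProduct.productMap τ σ).toRingHom) ≫
      tensorToPullback hj hw = g := by
  apply pullback.hom_ext
  · rw [Category.assoc, tensorToPullback_fst, ← hσ, ← Category.assoc, ← Spec.map_comp,
      ← CommRingCat.ofHom_comp]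
    congr 3
    ext a
    simp
  · rw [Category.assoc, tensorToPullback_snd, ← hτ, ← Category.assoc, ← Spec.map_comp,
      ← CommRingCat.ofHom_comp]
    congr 3
    ext a
    simp

end TensorToPullback

section GenericPoints

variable {k : Type u} [Field k] {C P : Scheme.{u}} {f : C ⟶ Spec (.of k)} {p : P ⟶ Spec (.of k)}
  {A : Type u} [CommRing A] [Algebra k A] {j : Spec (.of A) ⟶ C} [IsOpenImmersion j]

section Pullback

variable [IsIntegral (pullback f p)] [Algebra k (pullback f p).functionField]

theorem productMap_injective_of_isOpenImmersion {R : Type u} [CommRing R] [Algebra k R]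
    {w : Spec (.of R) ⟶ P} [IsOpenImmersion w]
    (hj : j ≫ f = Spec.map (CommRingCat.ofHom (algebraMap k A)))
    (hw : w ≫ p = Spec.map (CommRingCat.ofHom (algebraMap k R)))
    (τ : R →ₐ[k] (pullback f p).functionField)
    (hτ : Spec.map (CommRingCat.ofHom τ.toRingHom) ≫ w =
      (pullback f p).fromSpecStalk (genericPoint _) ≫ pullback.snd f p)
    (σ : A →ₐ[k] (pullback f p).functionField)
    (hσ : Spec.map (CommRingCat.ofHom σ.toRingHom) ≫ j =
      (pullback f p).fromSpecStalk (genericPoint _) ≫ pullback.fst f p) :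
    Function.Injective (Algebra.TensorProduct.productMap τ σ) := by
  have hfac := Spec_map_productMap_comp_tensorToPullback hj hw τ σ hτ hσ
  let ψ := CommRingCat.ofHom (Algebra.TensorProduct.productMap τ σ).toRingHom
  have : IsDominant (Spec.map ψ ≫ tensorToPullback hj hw) :=
    hfac ▸ isDominant_fromSpecStalk_genericPoint _
  have : IsDominant (Spec.map ψ) := .of_comp_of_isOpenImmersion _ (tensorToPullback hj hw)
  have : IsReduced (Spec (.of (R ⊗[k] A))) :=
    isReduced_of_isOpenImmersion (tensorToPullback hj hw)
  have : _root_.IsReduced (CommRingCat.of (R ⊗[k] A)) := (affine_isReduced_iff _).1 this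
  exact injective_of_isDominant_Spec_map ψ

variable [IsIntegral P] [Algebra k P.functionField]

theorem productMap_injective_of_functionField
    (hj : j ≫ f = Spec.map (CommRingCat.ofHom (algebraMap k A)))
    (hP : Spec.map (CommRingCat.ofHom (algebraMap k P.functionField)) =
      P.fromSpecStalk (genericPoint P) ≫ p)
    (τ : P.functionField →ₐ[k] (pullback f p).functionField)
    (hτ : Spec.map (CommRingCat.ofHom τ.toRingHom) ≫ P.fromSpecStalk (genericPoint P) =
      (pullback f p).fromSpecStalk (genericPoint _) ≫ pullback.snd f p)
    (σ : A →ₐ[k] (pullback f p).functionField)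
    (hσ : Spec.map (CommRingCat.ofHom σ.toRingHom) ≫ j =
      (pullback f p).fromSpecStalk (genericPoint _) ≫ pullback.fst f p) :
    Function.Injective (Algebra.TensorProduct.productMap τ σ) := by
  obtain ⟨_, ⟨W, hW : IsAffineOpen W, rfl⟩, hxW, -⟩ :=
    P.isBasis_affineOpens.exists_subset_of_mem_open (Set.mem_univ (genericPoint P)) isOpen_univ
  have : Nonempty W := ⟨_, hxW⟩
  let φ : CommRingCat.of k ⟶ Γ(P, W) := Spec.preimage (hW.fromSpec ≫ p)
  have hφ : Spec.map φ = hW.fromSpec ≫ p := Spec.map_preimage _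
  let : Algebra k Γ(P, W) := φ.hom.toAlgebra
  have hgerm : Spec.map (P.germToFunctionField W) ≫ hW.fromSpec =
      P.fromSpecStalk (genericPoint P) := hW.fromSpecStalk_eq_fromSpecStalk hxW
  have hcomp : φ ≫ P.germToFunctionField W =
      CommRingCat.ofHom (algebraMap k P.functionField) := by
    apply Spec.map_injective
    rw [Spec.map_comp, hφ, hP, ← hgerm, Category.assoc]
  have : IsScalarTower k Γ(P, W) P.functionField :=
    IsScalarTower.of_algebraMap_eq fun x => (congr($hcomp x)).symm
  have : IsFractionRing Γ(P, W) P.functionField :=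
    functionField_isFractionRing_of_isAffineOpen P W hW
  apply productMap_injective_of_isFractionRing (R := Γ(P, W))
  refine productMap_injective_of_isOpenImmersion hj (w := hW.fromSpec) hφ.symm _ ?_ _ hσ
  rw [← hτ, ← hgerm, ← Category.assoc, ← Spec.map_comp]
  rfl

variable [Nontrivial A]

theorem exists_algHom_functionField_pullback
    (hj : j ≫ f = Spec.map (CommRingCat.ofHom (algebraMap k A)))
    [IrreducibleSpace C] [Surjective f] [Surjective p]
    (hP : Spec.map (CommRingCat.ofHom (algebraMap k P.functionField)) =
      P.fromSpecStalk (genericPoint P) ≫ p)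
    (hX : Spec.map (CommRingCat.ofHom (algebraMap k (pullback f p).functionField)) =
      (pullback f p).fromSpecStalk (genericPoint _) ≫ pullback.fst f p ≫ f) :
    ∃ (τ : P.functionField →ₐ[k] (pullback f p).functionField)
      (σ : A →ₐ[k] (pullback f p).functionField),
      Spec.map (CommRingCat.ofHom τ.toRingHom) ≫ P.fromSpecStalk (genericPoint P) =
        (pullback f p).fromSpecStalk (genericPoint _) ≫ pullback.snd f p ∧
      Spec.map (CommRingCat.ofHom σ.toRingHom) ≫ j =
        (pullback f p).fromSpecStalk (genericPoint _) ≫ pullback.fst f p ∧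
      Function.Injective (Algebra.TensorProduct.productMap τ σ) := by
  have : Nonempty (Spec (.of A)) := PrimeSpectrum.nonempty_iff_nontrivial.2 ‹_›
  let ξ := (pullback f p).fromSpecStalk (genericPoint _)
  let c : Spec (pullback f p).functionField := IsLocalRing.closedPoint (pullback f p).functionField
  have hξ : ξ c = genericPoint ↥(pullback f p) := Scheme.fromSpecStalk_closedPoint
  obtain ⟨τ, hτ⟩ := exists_Spec_map_comp_fromSpecStalk_eq (ξ ≫ pullback.snd f p)
    (x := genericPoint P) (by
      change (ξ ≫ pullback.snd f p) c = _
      rw [Scheme.Hom.comp_apply, hξ, map_genericPoint])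
  obtain ⟨σ, hσ⟩ := exists_Spec_map_comp_eq j (ξ ≫ pullback.fst f p) (by
    rintro _ ⟨x, rfl⟩
    obtain rfl : x = c := Subsingleton.elim (α := PrimeSpectrum (pullback f p).functionField) _ _
    rw [Scheme.Hom.comp_apply, hξ, map_genericPoint]
    exact genericPoint_mem_range j)
  obtain ⟨τ, rfl⟩ := exists_algHom_of_Spec_map (k := k) τ (by
    rw [hP, hX, pullback.condition, reassoc_of% hτ])
  obtain ⟨σ, rfl⟩ := exists_algHom_of_Spec_map (A := .of A) (k := k) σ (by
    erw [hX, ← hj, reassoc_of% hσ])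
  exact ⟨τ, σ, hτ, hσ, productMap_injective_of_functionField hj hP τ hτ σ hσ⟩

end Pullback

variable [Nontrivial A] [LocallyOfFiniteType f] [GeometricallyIntegral f]

theorem exists_isGenericFamily (hj : j ≫ f = Spec.map (CommRingCat.ofHom (algebraMap k A)))
    (r : ℕ) : ∃ σ : Fin r → A →ₐ[k] genericField f r, IsGenericFamily σ ∧
      ∀ i, Spec.map (CommRingCat.ofHom (σ i).toRingHom) ≫ j = genericPt f r ≫ powerProj f r i := by
  induction r with
  | zero => exact ⟨fun i => i.elim0, fun i => i.elim0, fun i => i.elim0⟩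
  | succ r ih =>
    obtain ⟨σ, hσ, hσj⟩ := ih
    have : IsIntegral (pullback f (power f r).hom) := isIntegral_power (r + 1)
    have : IsIntegral C := GeometricallyIntegral.isIntegral_of_subsingleton f
    have : Surjective (power f r).hom :=
      ⟨fun x => ⟨genericPoint _, Subsingleton.elim (α := PrimeSpectrum k) _ _⟩⟩
    let : Algebra k (pullback f (power f r).hom).functionField :=
      (toGenericField f (r + 1)).toAlgebra
    obtain ⟨τ, σ₀, hτ, hσ₀, hinj⟩ := exists_algHom_functionField_pullback hj
      (Spec_map_algebraMap_genericField r) (Spec_map_algebraMap_genericField (f := f) (r + 1))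
    refine ⟨_, hσ.cons τ σ₀ hinj, Fin.cases hσ₀ fun i => ?_⟩
    have h : Spec.map (CommRingCat.ofHom (σ i).toRingHom ≫ CommRingCat.ofHom τ.toRingHom) ≫ j =
        (pullback f (power f r).hom).fromSpecStalk (genericPoint _) ≫
          pullback.snd f (power f r).hom ≫ powerProj f r i := by
      rw [Spec.map_comp, Category.assoc, hσj, ← reassoc_of% hτ]
      rfl
    exact h

end GenericPoints

/-! ### The divisor on an affine chart -/

section Chart

theorem comap_prod_pow_of_bijective {R S ι : Type*} [CommRing R] [CommRing S] [Fintype ι]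
    {φ : R →+* S} (hφ : Function.Bijective φ) (J : ι → Ideal S) (m : ι → ℕ) :
    (∏ i, J i ^ m i).comap φ = ∏ i, (J i).comap φ ^ m i := by
  have h : ∀ I : Ideal S, I.comap φ = I.map (RingEquiv.ofBijective φ hφ).symm := fun I =>
    (Ideal.map_symm (I := I) (RingEquiv.ofBijective φ hφ)).symm
  simp only [h, ← Ideal.mapHom_apply, map_prod, map_pow]

theorem idealSheafData_prod_pow_ideal {X : Scheme.{u}} {ι : Type*} (I : ι → X.IdealSheafData)
    (m : ι → ℕ) (s : Finset ι) (U : X.affineOpens) :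
    (∏ i ∈ s, I i ^ m i).ideal U = ∏ i ∈ s, (I i).ideal U ^ m i := by
  classical
  induction s using Finset.induction_on with
  | empty => simp
  | insert a s ha ih =>
    rw [Finset.prod_insert ha, Finset.prod_insert ha, ← ih]
    rfl

variable {X : Scheme.{u}} {B F : CommRingCat.{u}} (u : Spec B ⟶ X) [IsOpenImmersion u]
  {ι : Type*} (m : ι → ℕ)

theorem ker_inv_comp_appTop {Z : Scheme.{u}} (h : Z ⟶ Spec B) {g : Z ⟶ X} (hg : h ≫ u = g)
    [QuasiCompact g] :
    RingHom.ker ((Scheme.ΓSpecIso B).inv ≫ h.appTop).hom =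
      (g.ker.ideal ⟨u ''ᵁ ⊤, (isAffineOpen_top _).image_of_isOpenImmersion _⟩).comap
        ((Scheme.ΓSpecIso B).inv ≫ (u.appIso ⊤).inv).hom := by
  have hr : Set.range g ⊆ Set.range u := by
    rw [← hg]
    exact Set.range_comp_subset_range h u
  have hl : IsOpenImmersion.lift u g hr = h := by
    rw [← cancel_mono u, IsOpenImmersion.lift_fac, hg]
  have hp := IsOpenImmersion.isPullback_lift_id g u hr
  rw [hl] at hp
  have : QuasiCompact h := MorphismProperty.of_isPullback hp.flip inferInstance
  have hker := Scheme.ker_ideal_of_isPullback_of_isOpenImmersion g h (𝟙 _) u hp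
    ⟨⊤, isAffineOpen_top _⟩
  rw [Scheme.Hom.ker_apply] at hker
  rw [CommRingCat.hom_comp, CommRingCat.hom_comp, ← Ideal.comap_comap, ← hker, RingHom.comap_ker]
  rfl

theorem ker_inv_comp_appTop_subscheme_prod [Fintype ι] (e : ι → (B ⟶ F)) {x : ι → (Spec F ⟶ X)}
    (hx : ∀ i, Spec.map (e i) ≫ u = x i) [∀ i, QuasiCompact (x i)]
    (h : (∏ i, (x i).ker ^ m i).subscheme ⟶ Spec B)
    (hh : h ≫ u = (∏ i, (x i).ker ^ m i).subschemeι) :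
    RingHom.ker ((Scheme.ΓSpecIso B).inv ≫ h.appTop).hom = ∏ i, RingHom.ker (e i).hom ^ m i := by
  rw [ker_inv_comp_appTop u h hh, Scheme.IdealSheafData.ker_subschemeι,
    idealSheafData_prod_pow_ideal,
    comap_prod_pow_of_bijective (ConcreteCategory.bijective_of_isIso _)]
  refine Finset.prod_congr rfl fun i _ => ?_
  rw [← ker_inv_comp_appTop u (Spec.map (e i)) (hx i), ← Scheme.ΓSpecIso_inv_naturality,
    CommRingCat.hom_comp]
  congr 1
  exact RingHom.ker_comp_of_injective _
    (ConcreteCategory.bijective_of_isIso (Scheme.ΓSpecIso F).inv).1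

theorem support_prod_ker_pow_subset {X Z : Scheme.{u}} (x : ι → (Z ⟶ X))
    [∀ i, IsClosedImmersion (x i)] {U : Set X} (hx : ∀ i, Set.range (x i) ⊆ U) (s : Finset ι) :
    ((∏ i ∈ s, (x i).ker ^ m i).support : Set X) ⊆ U := by
  classical
  induction s using Finset.induction_on with
  | empty => exact Set.empty_subset _
  | insert a s ha ih =>
    rw [Finset.prod_insert ha, Scheme.IdealSheafData.support_mul, Closeds.coe_sup]
    refine Set.union_subset ?_ ih
    rcases eq_or_ne (m a) 0 with h0 | h0
    · rw [h0, pow_zero]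
      exact Set.empty_subset _
    · rw [Scheme.IdealSheafData.support_pow _ _ h0, Scheme.Hom.support_ker,
        (x a).isClosedEmbedding.isClosed_range.closure_eq]
      exact hx a

end Chart

section Divisor

variable {k : Type u} [Field k] {C : Scheme.{u}} {f : C ⟶ Spec (.of k)}
  {A : Type u} [CommRing A] [Algebra k A] {j : Spec (.of A) ⟶ C}
  (hj : j ≫ f = Spec.map (CommRingCat.ofHom (algebraMap k A))) {r : ℕ}

variable (r) in
/-- The chart `Spec (K ⊗ A)` of `C_K` obtained from a chart `Spec A` of `C`. -/
noncomputable abbrev chart [GeometricallyIrreducible f] :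
    Spec (.of (genericField f r ⊗[k] A)) ⟶ baseChange f r :=
  tensorToPullback (w := 𝟙 (Spec (.of (genericField f r)))) hj (Category.id_comp _)

variable [LocallyOfFiniteType f] [GeometricallyIntegral f]

theorem Spec_map_evalAt_comp_chart (σ : A →ₐ[k] genericField f r) {i : Fin r}
    (hσ : Spec.map (CommRingCat.ofHom σ.toRingHom) ≫ j = genericPt f r ≫ powerProj f r i) :
    Spec.map (CommRingCat.ofHom (evalAt σ).toRingHom) ≫ chart hj r = genericX f r i := by
  have h : (Algebra.TensorProduct.productMap (AlgHom.id k (genericField f r)) σ).toRingHom =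
      (evalAt σ).toRingHom :=
    Algebra.TensorProduct.ringHom_ext (by ext; simp) (by ext; simp)
  rw [← h]
  refine Spec_map_productMap_comp_tensorToPullback hj _ _ _ ?_ ?_
  · rw [genericX, pullback.lift_snd, Category.comp_id]
    exact Spec.map_id _
  · rw [genericX, pullback.lift_fst, hσ]

instance isClosedImmersion_genericX (i : Fin r) : IsClosedImmersion (genericX f r i) :=
  have : Subsingleton (Spec (.of (genericField f r))) :=
    inferInstanceAs (Subsingleton (PrimeSpectrum (genericField f r)))
  isClosedImmersion_of_comp_eq_id (pullback.snd f _) (genericX f r i) (pullback.lift_snd _ _ _)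

theorem exists_lift_schemeD [IsOpenImmersion j] (m : Fin r → ℕ)
    {σ : Fin r → A →ₐ[k] genericField f r}
    (hσ : ∀ i, Spec.map (CommRingCat.ofHom (σ i).toRingHom) ≫ j =
      genericPt f r ≫ powerProj f r i) :
    ∃ h : schemeD f r m ⟶ Spec (.of (genericField f r ⊗[k] A)),
      h ≫ chart hj r = (idealD f r m).subschemeι ∧
      Function.Surjective ((Scheme.ΓSpecIso _).inv ≫ h.appTop).hom ∧
      RingHom.ker ((Scheme.ΓSpecIso _).inv ≫ h.appTop).hom = ∏ i, pointIdeal (σ i) ^ m i := by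
  have hx := fun i => Spec_map_evalAt_comp_chart hj (σ i) (hσ i)
  have hr : Set.range (idealD f r m).subschemeι ⊆ Set.range (chart hj r) := by
    rw [Scheme.IdealSheafData.range_subschemeι]
    refine support_prod_ker_pow_subset m (genericX f r) (fun i => ?_) Finset.univ
    rw [← hx]
    exact Set.range_comp_subset_range _ (chart hj r)
  let h := IsOpenImmersion.lift (chart hj r) (idealD f r m).subschemeι hr
  have hh : h ≫ chart hj r = (idealD f r m).subschemeι := IsOpenImmersion.lift_fac _ _ _
  have : IsClosedImmersion (h ≫ chart hj r) := by rw [hh]; infer_instance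
  have : IsClosedImmersion h := .of_comp h (chart hj r)
  refine ⟨h, hh, ?_, ker_inv_comp_appTop_subscheme_prod (chart hj r) m _ hx h hh⟩
  rw [CommRingCat.hom_comp]
  exact (IsClosedImmersion.isAffine_surjective_of_isAffine h).2.comp
    (ConcreteCategory.bijective_of_isIso (Scheme.ΓSpecIso _).inv).2

variable (r) in
theorem isDomain_genericField_tensorProduct [IsOpenImmersion j] [Nontrivial A]
    (hj : j ≫ f = Spec.map (CommRingCat.ofHom (algebraMap k A))) :
    IsDomain (genericField f r ⊗[k] A) := by
  have : Nonempty (Spec (.of (genericField f r ⊗[k] A))) :=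
    PrimeSpectrum.nonempty_iff_nontrivial.2
      (inferInstanceAs (Nontrivial (genericField f r ⊗[k] A)))
  have : IsIntegral (Spec (.of (genericField f r ⊗[k] A))) :=
    isIntegral_of_isOpenImmersion (chart hj r)
  exact (affine_isIntegral_iff _).1 this

end Divisor

/-! ### Sections of invertible sheaves -/

section ModuleSheaf

instance final_opens_map {X Y : TopCat.{u}} (h : X ⟶ Y) : (Opens.map h).Final := by
  refine ⟨fun V => ?_⟩
  let t : StructuredArrow V (Opens.map h) := .mk (Y := ⊤) (homOfLE le_top)
  have : Nonempty (StructuredArrow V (Opens.map h)) := ⟨t⟩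
  have toTop (a : StructuredArrow V (Opens.map h)) : a ⟶ t :=
    StructuredArrow.homMk (homOfLE le_top) (Subsingleton.elim _ _)
  exact zigzag_isConnected fun a b => (Zigzag.of_hom (toTop a)).trans (Zigzag.of_inv (toTop b))

/-- The structure sheaf of `X`, as a module over itself. -/
noncomputable abbrev unitModule (X : Scheme.{u}) : X.Modules := SheafOfModules.unit X.ringCatSheaf

/-- The pullback `g^* s` of a global section `s` along `g : Y ⟶ X`. -/
noncomputable abbrev pullbackSection {X Y : Scheme.{u}} (g : Y ⟶ X) {L : X.Modules} (s : Γ(L, ⊤)) :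
    Γ((Scheme.Modules.pullback g).obj L, ⊤) :=
  (((Scheme.Modules.pullbackPushforwardAdjunction g).unit.app L).app ⊤).hom s

/-- The restriction of a global section `s` along an open immersion `j : Z ⟶ X`. -/
noncomputable abbrev restrictSection {X Z : Scheme.{u}} (j : Z ⟶ X) [IsOpenImmersion j]
    {L : X.Modules} (s : Γ(L, ⊤)) : Γ(L.restrict j, ⊤) :=
  (((Scheme.Modules.restrictAdjunction j).unit.app L).app ⊤).hom s

theorem exists_pullback_unitModule_iso {Y Z : Scheme.{u}} (h : Y ⟶ Z) :
    ∃ e : (Scheme.Modules.pullback h).obj (unitModule Z) ≅ unitModule Y,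
      ∀ a : Γ(Z, ⊤), (e.hom.app ⊤).hom (pullbackSection h (L := unitModule Z) a) =
        h.appTop.hom a := by
  let φ := h.toRingCatSheafHom
  have : (SheafOfModules.pushforward.{u} φ).IsRightAdjoint :=
    inferInstanceAs (Scheme.Modules.pushforward h).IsRightAdjoint
  have : (Opens.map h.base).Final := final_opens_map _
  let e : (SheafOfModules.pullback φ).obj (SheafOfModules.unit Z.ringCatSheaf) ⟶
    SheafOfModules.unit Y.ringCatSheaf := SheafOfModules.pullbackObjUnitToUnit φ
  have he : IsIso e := SheafOfModules.instIsIsoPullbackObjUnitToUnitOfFinal φ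
  have hadj := SheafOfModules.pullbackPushforwardAdjunction_homEquiv_pullbackObjUnitToUnit φ
  rw [Adjunction.homEquiv_unit] at hadj
  exact ⟨@asIso Y.Modules _ _ _ e he, fun a => congr(Scheme.Modules.Hom.app $hadj ⊤ a)⟩

theorem pullbackSection_map {Y Z : Scheme.{u}} (h : Y ⟶ Z) {M N : Z.Modules} (φ : M ⟶ N)
    (t : Γ(M, ⊤)) : pullbackSection h ((φ.app ⊤).hom t) =
      (((Scheme.Modules.pullback h).map φ).app ⊤).hom (pullbackSection h t) :=
  congr(Scheme.Modules.Hom.app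
    $((Scheme.Modules.pullbackPushforwardAdjunction h).unit.naturality φ) ⊤ t)

variable {X Y Z : Scheme.{u}} {L : X.Modules}

theorem exists_pullback_comp_iso_pullback_restrict (h : Y ⟶ Z) (j : Z ⟶ X) [IsOpenImmersion j]
    (L : X.Modules) :
    ∃ e : (Scheme.Modules.pullback (h ≫ j)).obj L ≅
      (Scheme.Modules.pullback h).obj (L.restrict j),
      ∀ s : Γ(L, ⊤), (e.hom.app ⊤).hom (pullbackSection (h ≫ j) s) =
        pullbackSection h (restrictSection j s) := by
  let adj := ((Scheme.Modules.restrictAdjunction j).comp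
    (Scheme.Modules.pullbackPushforwardAdjunction h)).ofNatIsoRight
      (Scheme.Modules.pushforwardComp h j)
  let adj' := Scheme.Modules.pullbackPushforwardAdjunction (h ≫ j)
  have hunit := Adjunction.unit_leftAdjointUniq_hom_app adj' adj L
  exact ⟨(adj'.leftAdjointUniq adj).app L, fun s => congr(Scheme.Modules.Hom.app $hunit ⊤ s)⟩

theorem exists_pullback_iso_unitModule (h : Y ⟶ Z) (j : Z ⟶ X) [IsOpenImmersion j] {g : Y ⟶ X}
    (hg : h ≫ j = g) (ψ : L.restrict j ≅ unitModule Z) :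
    ∃ Θ : (Scheme.Modules.pullback g).obj L ≅ unitModule Y,
      ∀ s : Γ(L, ⊤), (Θ.hom.app ⊤).hom (pullbackSection g s) =
        h.appTop.hom ((ψ.hom.app ⊤).hom (restrictSection j s)) := by
  subst hg
  obtain ⟨e, he⟩ := exists_pullback_unitModule_iso h
  obtain ⟨e', he'⟩ := exists_pullback_comp_iso_pullback_restrict h j L
  refine ⟨e' ≪≫ (Scheme.Modules.pullback h).mapIso ψ ≪≫ e, fun s => ?_⟩
  have hψ := congrArg (((Scheme.Modules.pullback h).map ψ.hom).app ⊤).hom (he' s)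
  exact (congrArg (e.hom.app ⊤).hom (hψ.trans (pullbackSection_map h ψ.hom _).symm)).trans (he _)

theorem map_injective_of_iso_unitModule [IsIntegral Z] {M : Z.Modules} (φ : M ≅ unitModule Z)
    {U V : Z.Opens} (i : V ⟶ U) [Nonempty V] : Function.Injective (M.presheaf.map i.op).hom := by
  have hφ : Function.Injective (φ.hom.app U).hom :=
    (ConcreteCategory.bijective_of_isIso (φ.hom.app U)).1
  refine Function.Injective.of_comp (f := (φ.hom.app V).hom) ?_
  have hnat : ⇑(φ.hom.app V).hom ∘ ⇑(M.presheaf.map i.op).hom =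
      ⇑(Z.presheaf.map i.op).hom ∘ ⇑(φ.hom.app U).hom :=
    funext fun s => (congr($(φ.hom.mapPresheaf.naturality i.op) s))
  rw [hnat]
  exact (map_injective_of_isIntegral Z i).comp hφ

theorem IsInvertibleSheaf.exists_affine_trivialization [Nonempty X] (hL : IsInvertibleSheaf L) :
    ∃ (A : CommRingCat.{u}) (j : Spec A ⟶ X) (_ : IsOpenImmersion j),
      Nontrivial A ∧ Nonempty (L.restrict j ≅ unitModule (Spec A)) := by
  obtain ⟨x⟩ := ‹Nonempty X›
  obtain ⟨U, hxU, ⟨φ⟩⟩ := hL x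
  obtain ⟨_, ⟨W, hW : IsAffineOpen W, rfl⟩, hxW, -⟩ :=
    U.toScheme.isBasis_affineOpens.exists_subset_of_mem_open (Set.mem_univ ⟨x, hxU⟩) isOpen_univ
  have : Nonempty W := ⟨_, hxW⟩
  exact ⟨Γ(U, W), hW.fromSpec ≫ U.ι, inferInstance, inferInstance,
    ⟨(Scheme.Modules.restrictFunctorComp hW.fromSpec U.ι).app L ≪≫
      (Scheme.Modules.restrictFunctor hW.fromSpec).mapIso φ ≪≫
      Scheme.Modules.restrictUnitIso hW.fromSpec⟩⟩

variable [IsIntegral X]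

theorem restrictSection_eq_zero_of_map_eq_zero (i : Z ⟶ X) [IsOpenImmersion i] [Nonempty Z]
    (φ : L.restrict i ≅ unitModule Z) (W : X.Opens) [Nonempty W] {s : Γ(L, ⊤)}
    (hs : (L.presheaf.map (homOfLE le_top : W ⟶ ⊤).op).hom s = 0) :
    restrictSection i s = 0 := by
  have : IsIntegral Z := isIntegral_of_isOpenImmersion i
  have : Nonempty (i ⁻¹ᵁ W : Z.Opens) := by
    obtain ⟨w⟩ := ‹Nonempty W›
    obtain ⟨_, hxW, z, rfl⟩ := nonempty_preirreducible_inter W.isOpen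
      i.isOpenEmbedding.isOpen_range ⟨w.1, w.2⟩ (Set.range_nonempty i)
    exact ⟨⟨z, hxW⟩⟩
  have hle : i ''ᵁ i ⁻¹ᵁ W ≤ W := i.image_preimage_le W
  have hmap : L.presheaf.map (homOfLE le_top : i ''ᵁ ⊤ ⟶ ⊤).op ≫
      L.presheaf.map (homOfLE (i.image_mono le_top) : i ''ᵁ i ⁻¹ᵁ W ⟶ i ''ᵁ ⊤).op =
      L.presheaf.map (homOfLE le_top : W ⟶ ⊤).op ≫ L.presheaf.map (homOfLE hle).op := by
    rw [← Functor.map_comp, ← Functor.map_comp]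
    rfl
  refine map_injective_of_iso_unitModule φ (homOfLE le_top : i ⁻¹ᵁ W ⟶ ⊤) ?_
  refine Eq.trans (congr($hmap s)) (Eq.trans ?_ (map_zero _).symm)
  exact (congrArg (L.presheaf.map (homOfLE hle).op).hom hs).trans (map_zero _)

theorem IsInvertibleSheaf.eq_zero_of_map_eq_zero (hL : IsInvertibleSheaf L) (W : X.Opens)
    [Nonempty W] {s : Γ(L, ⊤)} (hs : (L.presheaf.map (homOfLE le_top : W ⟶ ⊤).op).hom s = 0) :
    s = 0 := by
  choose U hxU hU using hL
  let S : TopCat.Sheaf Ab X := ⟨L.presheaf, L.isSheaf⟩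
  refine S.eq_of_locally_eq' (fun x => (U x).ι ''ᵁ ⊤) ⊤ (fun x => homOfLE le_top) ?_ s 0
    fun x => ?_
  · intro x _
    rw [Opens.mem_iSup]
    exact ⟨x, by simpa using hxU x⟩
  · have : Nonempty (U x) := ⟨⟨x, hxU x⟩⟩
    refine (restrictSection_eq_zero_of_map_eq_zero (U x).ι (hU x).some W hs).trans ?_
    exact (map_zero (L.presheaf.map (homOfLE le_top : (U x).ι ''ᵁ ⊤ ⟶ ⊤).op).hom).symm

end ModuleSheaf

/-! ### The canonical map -/

section LinearModel

variable {k K A V E S : Type*} [Field k] [CommRing K] [Algebra k K] [CommRing A]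
  [Algebra k A] [AddCommGroup V] [Module k V] [AddCommGroup E] [Module K E] [CommRing S]

theorem range_baseChange_eq_baseChange_range (α : V →ₗ[k] A) :
    LinearMap.range (α.baseChange K) = (LinearMap.range α).baseChange K := by
  have hsurj : LinearMap.range (α.rangeRestrict.baseChange K) = ⊤ :=
    LinearMap.range_eq_top.2 (LinearMap.lTensor_surjective K α.surjective_rangeRestrict)
  rw [Submodule.baseChange, ← LinearMap.range_comp_of_range_eq_top _ hsurj,
    ← LinearMap.baseChange_comp]
  rfl

theorem injective_or_surjective_of_disjoint_or_codisjoint {Φ : K ⊗[k] V →ₗ[K] E}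
    {π : K ⊗[k] A →+* S} {θ : E →+ S} (hθ : Function.Injective θ) (hπ : Function.Surjective π)
    {α : V →ₗ[k] A} (hα : Function.Injective α) (h : ∀ c v, θ (Φ (c ⊗ₜ v)) = π (c ⊗ₜ α v))
    (hker : Disjoint ((LinearMap.range α).baseChange K) ((RingHom.ker π).restrictScalars K) ∨
      Codisjoint ((LinearMap.range α).baseChange K) ((RingHom.ker π).restrictScalars K)) :
    Function.Injective Φ ∨ Function.Surjective Φ := by
  have hΦ (z : K ⊗[k] V) : θ (Φ z) = π (α.baseChange K z) := by
    induction z with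
    | zero => simp
    | tmul c v => rw [h, LinearMap.baseChange_tmul]
    | add z w hz hw => simp only [map_add, hz, hw]
  rw [← range_baseChange_eq_baseChange_range] at hker
  refine hker.imp (fun hdisj => ?_) fun hcodisj e => ?_
  · refine (injective_iff_map_eq_zero _).2 fun z hz => ?_
    have hz' : α.baseChange K z = 0 := Submodule.disjoint_def.1 hdisj _ ⟨z, rfl⟩
      (RingHom.mem_ker.2 (by rw [← hΦ, hz, map_zero]))
    exact Module.Flat.lTensor_preserves_injective_linearMap (M := K) α hα
      (hz'.trans (map_zero _).symm)
  · obtain ⟨x, hx⟩ := hπ (θ e)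
    obtain ⟨_, ⟨z, rfl⟩, y, hy, rfl⟩ := Submodule.mem_sup.1
      (hcodisj.eq_top ▸ Submodule.mem_top : x ∈ _)
    refine ⟨z, hθ ?_⟩
    rw [hΦ, ← hx, map_add, RingHom.mem_ker.1 hy, add_zero]

end LinearModel

section LocalSection

theorem baseToSections_comp_Spec_map {R B : Type u} [CommRing R] [CommRing B] (φ : R →+* B)
    {X : Scheme.{u}} {h : X ⟶ Spec (.of B)} {p : X ⟶ Spec (.of R)}
    (hp : h ≫ Spec.map (CommRingCat.ofHom φ) = p) (c : R) :
    baseToSections p c = ((Scheme.ΓSpecIso (.of B)).inv ≫ h.appTop).hom (φ c) := by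
  subst hp
  rw [baseToSections, Scheme.Hom.comp_appTop, ← Scheme.ΓSpecIso_inv_naturality_assoc]
  rfl

theorem appTop_baseToSections {R : Type u} [CommRing R] {X Y : Scheme.{u}} (j : Y ⟶ X)
    (p : X ⟶ Spec (.of R)) (c : R) :
    j.appTop.hom (baseToSections p c) = baseToSections (j ≫ p) c := by
  rw [baseToSections, baseToSections, Scheme.Hom.comp_appTop]
  rfl

variable {k A : Type u} [CommRing k] [CommRing A] [Algebra k A] {C : Scheme.{u}}
  {f : C ⟶ Spec (.of k)} {j : Spec (.of A) ⟶ C} {L : C.Modules}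

theorem appTop_baseToSections_eq_algebraMap
    (hj : j ≫ f = Spec.map (CommRingCat.ofHom (algebraMap k A))) (c : k) :
    j.appTop.hom (baseToSections f c) =
      (Scheme.ΓSpecIso (.of A)).inv.hom (algebraMap k A c) := by
  rw [appTop_baseToSections, baseToSections_comp_Spec_map (algebraMap k A) (h := 𝟙 _)
    (by rw [hj, Category.id_comp])]
  simp

variable [IsOpenImmersion j]

/-- The function on `Spec A` corresponding to a global section of `L` under a trivialization of `L`
along `j : Spec A ⟶ C`. -/
noncomputable def localSection (hj : j ≫ f = Spec.map (CommRingCat.ofHom (algebraMap k A)))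
    (ψ : L.restrict j ≅ unitModule (Spec (.of A))) : GlobalSections f L →ₗ[k] A where
  toFun s := (Scheme.ΓSpecIso (.of A)).hom.hom ((ψ.hom.app ⊤).hom (restrictSection j s))
  map_add' s t := by
    have h1 := map_add (((Scheme.Modules.restrictAdjunction j).unit.app L).app ⊤).hom s t
    have h2 := (congrArg (ψ.hom.app ⊤).hom h1).trans (map_add (ψ.hom.app ⊤).hom _ _)
    exact (congrArg (Scheme.ΓSpecIso (.of A)).hom.hom h2).trans (map_add _ _ _)
  map_smul' c s := by
    let b : Γ(Spec (.of A), ⊤) := j.appTop.hom (baseToSections f c)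
    let x : Γ(Spec (.of A), ⊤) := (ψ.hom.app ⊤).hom (restrictSection j s)
    have hrestrict : restrictSection j (baseToSections f c • s : Γ(L, ⊤)) =
        b • restrictSection j s :=
      Scheme.Modules.Hom.app_smul ((Scheme.Modules.restrictAdjunction j).unit.app L)
        (U := ⊤) (baseToSections f c) s
    have hψ : (ψ.hom.app ⊤).hom (b • restrictSection j s) = b * x :=
      Scheme.Modules.Hom.app_smul ψ.hom (U := ⊤) b (restrictSection j s)
    have hA : (Scheme.ΓSpecIso (.of A)).hom.hom (b * x) =
        c • (Scheme.ΓSpecIso (.of A)).hom.hom x := by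
      rw [map_mul, Algebra.smul_def,
        show b = _ from appTop_baseToSections_eq_algebraMap hj c]
      exact congrArg (· * _) congr($((Scheme.ΓSpecIso (.of A)).inv_hom_id) _)
    refine Eq.trans (congrArg (Scheme.ΓSpecIso (.of A)).hom.hom ?_) hA
    exact (congrArg (ψ.hom.app ⊤).hom hrestrict).trans hψ

theorem localSection_injective [IsIntegral C] [Nontrivial A] (hL : IsInvertibleSheaf L)
    (hj : j ≫ f = Spec.map (CommRingCat.ofHom (algebraMap k A)))
    (ψ : L.restrict j ≅ unitModule (Spec (.of A))) : Function.Injective (localSection hj ψ) := by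
  refine (injective_iff_map_eq_zero _).2 fun s hs => ?_
  have hψ : (ψ.hom.app ⊤).hom (restrictSection j s) = 0 :=
    (ConcreteCategory.bijective_of_isIso (Scheme.ΓSpecIso (.of A)).hom).1
      (hs.trans (map_zero _).symm)
  have hs' : restrictSection j s = 0 :=
    (ConcreteCategory.bijective_of_isIso (ψ.hom.app ⊤)).1
      (hψ.trans (map_zero (ψ.hom.app ⊤).hom).symm)
  have : Nonempty (Spec (.of A)) := PrimeSpectrum.nonempty_iff_nontrivial.2 ‹_›
  have : Nonempty (j ''ᵁ j ⁻¹ᵁ ⊤ : C.Opens) := ⟨⟨j (Classical.arbitrary _), by simp⟩⟩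
  exact hL.eq_zero_of_map_eq_zero (j ''ᵁ j ⁻¹ᵁ ⊤) hs'

end LocalSection

section CanonicalMap

variable {k : Type u} [Field k] {C : Scheme.{u}} {f : C ⟶ Spec (.of k)} {L : C.Modules}

theorem canonicalMap_tmul [GeometricallyIrreducible f] (V : Submodule k (GlobalSections f L))
    {r : ℕ} (m : Fin r → ℕ) (c : genericField f r) (v : V) :
    canonicalMap f L V r m (c ⊗ₜ v) = c • evalD f L r m v := by
  rw [canonicalMap, LinearMap.liftBaseChange_tmul]
  rfl

variable {A : Type u} [CommRing A] [Algebra k A] {j : Spec (.of A) ⟶ C} [IsOpenImmersion j]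
  [LocallyOfFiniteType f] [GeometricallyIntegral f]

theorem exists_canonicalMap_eq_localSection
    (hj : j ≫ f = Spec.map (CommRingCat.ofHom (algebraMap k A)))
    (ψ : L.restrict j ≅ unitModule (Spec (.of A))) (V : Submodule k (GlobalSections f L))
    {r : ℕ} (m : Fin r → ℕ) {σ : Fin r → A →ₐ[k] genericField f r}
    (hσ : ∀ i, Spec.map (CommRingCat.ofHom (σ i).toRingHom) ≫ j =
      genericPt f r ≫ powerProj f r i) :
    ∃ (π : genericField f r ⊗[k] A →+* Γ(schemeD f r m, ⊤))
      (θ : H0D f L r m →+ Γ(schemeD f r m, ⊤)),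
      Function.Surjective π ∧ RingHom.ker π = ∏ i, pointIdeal (σ i) ^ m i ∧
      Function.Injective θ ∧ ∀ (c : genericField f r) (v : V),
        θ (canonicalMap f L V r m (c ⊗ₜ v)) = π (c ⊗ₜ localSection hj ψ v) := by
  obtain ⟨h, hh, hsurj, hker⟩ := exists_lift_schemeD hj m hσ
  let ι : A →+* genericField f r ⊗[k] A :=
    (Algebra.TensorProduct.includeRight (R := k) (A := genericField f r) (B := A)).toRingHom
  have hC : (h ≫ Spec.map (CommRingCat.ofHom ι)) ≫ j = toC f r m := by
    rw [toC, ← hh, Category.assoc, Category.assoc, tensorToPullback_fst]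
  have hK : h ≫ Spec.map (CommRingCat.ofHom Algebra.TensorProduct.includeLeftRingHom) =
      toSpecK f r m := by
    rw [toSpecK, ← hh, Category.assoc, tensorToPullback_snd, Category.comp_id]
  obtain ⟨Θ, hΘ⟩ := exists_pullback_iso_unitModule _ j hC ψ
  let θ : H0D f L r m →+ Γ(schemeD f r m, ⊤) := (Θ.hom.app ⊤).hom
  refine ⟨_, θ, hsurj, hker, (ConcreteCategory.bijective_of_isIso (Θ.hom.app ⊤)).1,
    fun c v => ?_⟩
  have hsmul (e : H0D f L r m) : θ (c • e) = baseToSections (toSpecK f r m) c * θ e :=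
    Scheme.Modules.Hom.app_smul Θ.hom (U := ⊤) (baseToSections (toSpecK f r m) c) e
  have happ : (h ≫ Spec.map (CommRingCat.ofHom ι)).appTop = (Scheme.ΓSpecIso (.of A)).hom ≫
      CommRingCat.ofHom ι ≫ (Scheme.ΓSpecIso (.of (genericField f r ⊗[k] A))).inv ≫
        h.appTop := by
    rw [Scheme.Hom.comp_appTop, Scheme.ΓSpecIso_inv_naturality_assoc, Iso.hom_inv_id_assoc]
  have heval : θ (evalD f L r m v) = ((Scheme.ΓSpecIso (.of (genericField f r ⊗[k] A))).inv ≫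
      h.appTop).hom (1 ⊗ₜ localSection hj ψ v) :=
    (hΘ (v : GlobalSections f L)).trans congr($happ _)
  rw [canonicalMap_tmul, hsmul, heval, baseToSections_comp_Spec_map _ hK, ← map_mul]
  congr 1
  change (c ⊗ₜ[k] (1 : A)) * (1 ⊗ₜ localSection hj ψ v) = _
  rw [Algebra.TensorProduct.tmul_mul_tmul, mul_one, one_mul]

theorem injective_or_surjective_canonicalMap_of_chart [CharZero k] [Nontrivial A]
    (hj : j ≫ f = Spec.map (CommRingCat.ofHom (algebraMap k A)))
    (ψ : L.restrict j ≅ unitModule (Spec (.of A))) (hL : IsInvertibleSheaf L) {t : A}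
    (ht : Algebra.IsAlgebraic (Algebra.adjoin k {t}) A) (V : Submodule k (GlobalSections f L))
    {r : ℕ} (m : Fin r → ℕ) :
    Function.Injective (canonicalMap f L V r m) ∨ Function.Surjective (canonicalMap f L V r m) := by
  have : IsIntegral C := GeometricallyIntegral.isIntegral_of_subsingleton f
  have : IsDomain (genericField f r ⊗[k] A) := isDomain_genericField_tensorProduct r hj
  obtain ⟨σ, hσ, hσj⟩ := exists_isGenericFamily hj r
  obtain ⟨π, θ, hπ, hker, hθ, h⟩ := exists_canonicalMap_eq_localSection hj ψ V m hσj
  refine injective_or_surjective_of_disjoint_or_codisjoint hθ hπ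
    (α := (localSection hj ψ).comp V.subtype)
    ((localSection_injective hL hj ψ).comp V.subtype_injective) h ?_
  rw [hker]
  exact hσ.disjoint_or_codisjoint_prod ht _ m

end CanonicalMap

section Dimension

theorem ringKrullDim_le_topologicalKrullDim {X : Scheme.{u}} {A : CommRingCat.{u}} (j : Spec A ⟶ X)
    [IsOpenImmersion j] : ringKrullDim A ≤ topologicalKrullDim X := by
  rw [← PrimeSpectrum.topologicalKrullDim_eq_ringKrullDim]
  exact j.isOpenEmbedding.isInducing.topologicalKrullDim_le

theorem finiteType_of_isOpenImmersion {k A : Type u} [CommRing k] [CommRing A] [Algebra k A]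
    {X : Scheme.{u}} {f : X ⟶ Spec (.of k)} [LocallyOfFiniteType f] {j : Spec (.of A) ⟶ X}
    [IsOpenImmersion j] (hj : j ≫ f = Spec.map (CommRingCat.ofHom (algebraMap k A))) :
    Algebra.FiniteType k A := by
  have : LocallyOfFiniteType (Spec.map (CommRingCat.ofHom (algebraMap k A))) := by
    rw [← hj]
    infer_instance
  exact RingHom.finiteType_algebraMap.1
    ((HasRingHomProperty.Spec_iff (P := @LocallyOfFiniteType)).1 this)

end Dimension

end GenericDivisor

open GenericDivisor in
theorem statement_9_general {k : Type u} [Field k] [CharZero k] {C : Scheme.{u}}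
    (f : C ⟶ Spec (.of k)) [LocallyOfFiniteType f] [GeometricallyIrreducible f] [IsReduced C]
    (hdim : topologicalKrullDim C ≤ 1) (L : C.Modules) (hL : IsInvertibleSheaf L)
    (V : Submodule k (GlobalSections f L)) (r : ℕ) (m : Fin r → ℕ) :
    Function.Injective (canonicalMap f L V r m) ∨ Function.Surjective (canonicalMap f L V r m) := by
  have : GeometricallyIntegral f := geometricallyIntegral_of_charZero
  have : IsIntegral C := GeometricallyIntegral.isIntegral_of_subsingleton f
  obtain ⟨A, j, _, _, ⟨ψ⟩⟩ := hL.exists_affine_trivialization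
  let : Algebra k A := (Spec.preimage (j ≫ f)).hom.toAlgebra
  have hj : j ≫ f = Spec.map (CommRingCat.ofHom (algebraMap k A)) := (Spec.map_preimage _).symm
  have : Nonempty (Spec A) := PrimeSpectrum.nonempty_iff_nontrivial.2 ‹_›
  have : IsDomain A := (affine_isIntegral_iff A).1 (isIntegral_of_isOpenImmersion j)
  have : Algebra.FiniteType k A := finiteType_of_isOpenImmersion (A := A) hj
  obtain ⟨t, ht⟩ := exists_isAlgebraic_adjoin_singleton (k := k) (A := A)
    ((ringKrullDim_le_topologicalKrullDim j).trans hdim)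
  exact injective_or_surjective_canonicalMap_of_chart (A := A) hj ψ hL ht V m

theorem statement_9 {k : Type u} [Field k] [CharZero k] {C : Scheme.{u}} (f : C ⟶ Spec (.of k))
    [GeometricallyIrreducible f] [IsReduced C] (hqp : GenericDivisor.IsQuasiProjective f)
    (hdim : topologicalKrullDim C = 1)
    (L : C.Modules) (hL : GenericDivisor.IsInvertibleSheaf L)
    (V : Submodule k (GenericDivisor.GlobalSections f L)) [FiniteDimensional k V]
    (r : ℕ) (m : Fin r → ℕ) (hm : ∀ i, 0 < m i) :
    Function.Injective (GenericDivisor.canonicalMap f L V r m) ∨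
      Function.Surjective (GenericDivisor.canonicalMap f L V r m) := by
  have := hqp.locallyOfFiniteType
  exact statement_9_general f hdim.le L hL V r m
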